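/- arXiv:2301.09265 — 3 statements merged into one kernel-verified Lean document; each statement's English description precedes it below -/
import Mathlib

section
/- Let G be a finite group and p a prime. Suppose G is p-index extremal (G ∈ R(p)) and no p-element of G has nontrivial p-index (i.e., G ∈ R(p)**). Then in any composition series of G, at most one composition factor is a nonabelian simple group whose order is divisible by p. -/
/-- The index of an element `x` of a group `G`: the size of its conjugacy class,
`|x^G| = |G : C_G(x)|`. -/
noncomputable def classSize {G : Type*} [Group G] (x : G) : ℕ :=
  (Subgroup.centralizer {x}).index

/-- The `p`-index of `x`: the `p`-part of `|x^G|`. -/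
noncomputable def pIndex (p : ℕ) {G : Type*} [Group G] (x : G) : ℕ :=
  p ^ ((classSize x).factorization p)

/-- `G` is `p`-index extremal (`G ∈ R(p)`): the set `N(G)_p` of `p`-indices of elements of `G`
contains exactly one nontrivial element. -/
def IsPIndexExtremal (p : ℕ) (G : Type*) [Group G] : Prop :=
  ∃! a : ℕ, a ≠ 1 ∧ ∃ x : G, pIndex p x = a

/-- `x` is a `p`-element: its order is a power of `p`. -/
def IsPElement (p : ℕ) {G : Type*} [Group G] (x : G) : Prop :=
  ∃ k : ℕ, orderOf x = p ^ k

namespace RP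

open Subgroup

/-- `x` has `p`-power order. -/
def PE (p : ℕ) {G : Type*} [Group G] (x : G) : Prop := ∃ k : ℕ, x ^ (p ^ k) = 1

/-- `y` has order coprime to `p`. -/
def PR (p : ℕ) {G : Type*} [Group G] (y : G) : Prop := ∃ n : ℕ, p.Coprime n ∧ y ^ n = 1

section elements

variable {G : Type*} [Group G] {H : Type*} [Group H] {p : ℕ}

lemma PE.one : PE p (1 : G) := ⟨0, by simp⟩
lemma PR.one : PR p (1 : G) := ⟨1, by simp⟩

lemma PE.map {x : G} (hx : PE p x) (f : G →* H) : PE p (f x) := by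
  obtain ⟨k, hk⟩ := hx
  exact ⟨k, by rw [← map_pow, hk, map_one]⟩

lemma PR.map {x : G} (hx : PR p x) (f : G →* H) : PR p (f x) := by
  obtain ⟨k, hc, hk⟩ := hx
  exact ⟨k, hc, by rw [← map_pow, hk, map_one]⟩

lemma PE.of_map {x : G} (f : G →* H) (hf : Function.Injective f) (hx : PE p (f x)) : PE p x := by
  obtain ⟨k, hk⟩ := hx
  exact ⟨k, hf (by rw [map_pow, hk, map_one])⟩

lemma PR.of_map {x : G} (f : G →* H) (hf : Function.Injective f) (hx : PR p (f x)) : PR p x := by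
  obtain ⟨k, hc, hk⟩ := hx
  exact ⟨k, hc, hf (by rw [map_pow, hk, map_one])⟩

lemma PE.conj {x : G} (hx : PE p x) (g : G) : PE p (g * x * g⁻¹) := by
  simpa using hx.map (MulAut.conj g).toMonoidHom

lemma PR.conj {x : G} (hx : PR p x) (g : G) : PR p (g * x * g⁻¹) := by
  simpa using hx.map (MulAut.conj g).toMonoidHom

lemma PE.zpow {x y : G} (hx : PE p x) (hy : y ∈ zpowers x) : PE p y := by
  obtain ⟨k, hk⟩ := hx
  obtain ⟨n, rfl⟩ := mem_zpowers_iff.1 hy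
  refine ⟨k, ?_⟩
  rw [← zpow_natCast, ← zpow_mul, mul_comm, zpow_mul, zpow_natCast, hk, one_zpow]

lemma PE.mul {x y : G} (hx : PE p x) (hy : PE p y) (h : Commute x y) : PE p (x * y) := by
  obtain ⟨k, hk⟩ := hx
  obtain ⟨l, hl⟩ := hy
  refine ⟨k + l, ?_⟩
  rw [h.mul_pow, pow_add, pow_mul, hk, one_pow, mul_comm (p ^ k), pow_mul, hl, one_pow, one_mul]

lemma PE.inv {x : G} (hx : PE p x) : PE p x⁻¹ := hx.zpow (inv_mem (mem_zpowers x))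

lemma PR.mul {x y : G} (hx : PR p x) (hy : PR p y) (h : Commute x y) : PR p (x * y) := by
  obtain ⟨k, hc, hk⟩ := hx
  obtain ⟨l, hd, hl⟩ := hy
  refine ⟨k * l, hc.mul_right hd, ?_⟩
  rw [h.mul_pow, pow_mul, hk, one_pow, mul_comm k, pow_mul, hl, one_pow, one_mul]

lemma PR.inv {x : G} (hx : PR p x) : PR p x⁻¹ := by
  obtain ⟨k, hc, hk⟩ := hx
  exact ⟨k, hc, by simp [hk]⟩

lemma eq_one_of_PE_PR {x : G} (hx : PE p x) (hy : PR p x) : x = 1 := by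
  obtain ⟨k, hk⟩ := hx
  obtain ⟨n, hc, hn⟩ := hy
  have h := Nat.Coprime.pow_left k hc
  have h1 := Nat.dvd_gcd (orderOf_dvd_of_pow_eq_one hk) (orderOf_dvd_of_pow_eq_one hn)
  rw [h] at h1
  exact orderOf_eq_one_iff.1 (Nat.dvd_one.1 h1)

lemma recover {x y : G} (hx : PE p x) (hy : PR p y) (h : Commute x y) :
    x ∈ zpowers (x * y) ∧ y ∈ zpowers (x * y) := by
  obtain ⟨k, hk⟩ := hx
  obtain ⟨n, hc, hn⟩ := hy
  have hcop : IsCoprime ((p ^ k : ℕ) : ℤ) (n : ℤ) :=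
    Nat.isCoprime_iff_coprime.2 (Nat.Coprime.pow_left k hc)
  obtain ⟨u, v, huv⟩ := hcop
  have hx1 : ∀ w : ℤ, x ^ (w * ((p ^ k : ℕ) : ℤ)) = 1 := fun w => by
    rw [mul_comm, zpow_mul, zpow_natCast, hk, one_zpow]
  have hy1 : ∀ w : ℤ, y ^ (w * (n : ℤ)) = 1 := fun w => by
    rw [mul_comm, zpow_mul, zpow_natCast, hn, one_zpow]
  constructor
  · refine mem_zpowers_iff.2 ⟨v * n, ?_⟩
    rw [h.mul_zpow, hy1, mul_one]
    have : v * (n : ℤ) = 1 - u * ((p ^ k : ℕ) : ℤ) := by linarith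
    rw [this, zpow_sub, hx1, zpow_one, inv_one, mul_one]
  · refine mem_zpowers_iff.2 ⟨u * ((p ^ k : ℕ) : ℤ), ?_⟩
    rw [h.mul_zpow, hx1, one_mul]
    have : u * ((p ^ k : ℕ) : ℤ) = 1 - v * (n : ℤ) := by linarith
    rw [this, zpow_sub, hy1, zpow_one, inv_one, mul_one]

lemma decomp [Finite G] (hp : p.Prime) (g : G) : ∃ x y : G, PE p x ∧ PR p y ∧ Commute x y ∧
    x * y = g := by
  have ho : orderOf g ≠ 0 := (orderOf_pos g).ne'
  obtain ⟨k, n, hn, hkn⟩ := Nat.exists_eq_pow_mul_and_not_dvd ho p hp.ne_one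
  have hc : p.Coprime n := (Nat.Prime.coprime_iff_not_dvd hp).2 hn
  have hcop : IsCoprime ((p ^ k : ℕ) : ℤ) (n : ℤ) :=
    Nat.isCoprime_iff_coprime.2 (Nat.Coprime.pow_left k hc)
  obtain ⟨u, v, huv⟩ := hcop
  have hg : g ^ (((p ^ k : ℕ) : ℤ) * (n : ℤ)) = 1 := by
    rw [← Nat.cast_mul, ← hkn, zpow_natCast, pow_orderOf_eq_one]
  refine ⟨g ^ (v * n), g ^ (u * ((p ^ k : ℕ) : ℤ)), ⟨k, ?_⟩, ⟨n, hc, ?_⟩, ?_, ?_⟩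
  · rw [← zpow_natCast, ← zpow_mul, mul_assoc, mul_comm (n : ℤ), mul_comm v, zpow_mul, hg, one_zpow]
  · rw [← zpow_natCast, ← zpow_mul, mul_assoc, mul_comm u, zpow_mul, hg, one_zpow]
  · exact (Commute.refl g).zpow_zpow _ _
  · rw [← zpow_add, add_comm, huv, zpow_one]

lemma decomp_unique {x y x' y' : G} (hx : PE p x) (hy : PR p y) (h : Commute x y)
    (hx' : PE p x') (hy' : PR p y') (h' : Commute x' y') (e : x * y = x' * y') :
    x = x' ∧ y = y' := by
  obtain ⟨a1, a2⟩ := recover hx hy h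
  obtain ⟨b1, b2⟩ := recover hx' hy' h'
  rw [← e] at b1 b2
  have comm : ∀ a ∈ zpowers (x * y), ∀ b ∈ zpowers (x * y), Commute a b := by
    intro a ha b hb
    obtain ⟨i, rfl⟩ := mem_zpowers_iff.1 ha
    obtain ⟨j, rfl⟩ := mem_zpowers_iff.1 hb
    exact (Commute.refl _).zpow_zpow _ _
  have e2 : x'⁻¹ * x = y' * y⁻¹ := by
    rw [eq_mul_inv_iff_mul_eq, mul_assoc, e]; group
  have h1 : PE p (x'⁻¹ * x) := hx'.inv.mul hx (comm _ (inv_mem b1) _ a1)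
  have h2 : PR p (x'⁻¹ * x) := e2 ▸ hy'.mul hy.inv (comm _ b2 _ (inv_mem a2))
  have h3 := eq_one_of_PE_PR h1 h2
  have h4 : x = x' := (inv_mul_eq_one.1 h3).symm
  refine ⟨h4, ?_⟩
  rw [h4] at e
  exact mul_left_cancel e

lemma cent_mul {x y : G} (hx : PE p x) (hy : PR p y) (h : Commute x y) :
    centralizer {x * y} = centralizer {x} ⊓ centralizer ({y} : Set G) := by
  obtain ⟨a1, a2⟩ := recover hx hy h
  ext g
  simp only [mem_inf, mem_centralizer_singleton_iff]
  constructor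
  · intro hg
    have key : ∀ a ∈ zpowers (x * y), g * a = a * g := by
      intro a ha
      obtain ⟨i, rfl⟩ := mem_zpowers_iff.1 ha
      exact (Commute.zpow_right (show Commute g (x * y) from hg) i)
    exact ⟨key _ a1, key _ a2⟩
  · rintro ⟨h1, h2⟩
    exact Commute.mul_right (show Commute g x from h1) h2

lemma isPElement_of_PE (hp : p.Prime) {x : G} (hx : PE p x) : IsPElement p x := by
  obtain ⟨k, hk⟩ := hx
  obtain ⟨m, -, hm⟩ := (Nat.dvd_prime_pow hp).1 (orderOf_dvd_of_pow_eq_one hk)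
  exact ⟨m, hm⟩

/-- Lift of a `p`-element along a surjection. -/
lemma lift_pair [Finite G] (hp : p.Prime) (f : G →* H) (g : G) {x y : H}
    (hx : PE p x) (hy : PR p y) (h : Commute x y) (hg : f g = x * y) :
    ∃ a b : G, PE p a ∧ PR p b ∧ Commute a b ∧ a * b = g ∧ f a = x ∧ f b = y := by
  obtain ⟨a, b, ha, hb, hab, e⟩ := decomp hp g
  refine ⟨a, b, ha, hb, hab, e, ?_⟩
  exact decomp_unique (ha.map f) (hb.map f) (hab.map f) hx hy h (by rw [← map_mul, e, hg])

end elements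

section sylow

variable {G : Type*} [Group G] [Finite G] {p : ℕ} [Fact p.Prime]

/-- `Q` is a Sylow `p`-subgroup of the subgroup `M`. -/
def Syl (p : ℕ) {G : Type*} [Group G] (Q M : Subgroup G) : Prop :=
  Q ≤ M ∧ IsPGroup p Q ∧ ¬ p ∣ Q.relIndex M

lemma Syl.PE {G : Type*} [Group G] {p : ℕ} {Q M : Subgroup G} (h : Syl p Q M) {x : G}
    (hx : x ∈ Q) : PE p x := by
  obtain ⟨k, hk⟩ := h.2.1 ⟨x, hx⟩
  exact ⟨k, by simpa [Subtype.ext_iff] using hk⟩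

lemma isPGroup_of_PE {G : Type*} [Group G] {p : ℕ} {Q : Subgroup G} (h : ∀ x ∈ Q, PE p x) :
    IsPGroup p Q := by
  rintro ⟨x, hx⟩
  obtain ⟨k, hk⟩ := h x hx
  exact ⟨k, by simpa [Subtype.ext_iff] using hk⟩

lemma Syl.exists (p : ℕ) [Fact p.Prime] (M : Subgroup G) : ∃ Q, Syl p Q M := by
  obtain ⟨P⟩ : Nonempty (Sylow p M) := inferInstance
  refine ⟨(P : Subgroup M).map M.subtype, map_subtype_le _, P.2.map _, ?_⟩
  rw [relIndex, ← comap_subtype, comap_map_eq_self_of_injective M.subtype_injective]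
  exact P.not_dvd_index

/-- any `p`-subgroup of `M` is `M`-conjugate into `Q`. -/
lemma Syl.conj_le {Q M R : Subgroup G} (h : Syl p Q M) (hR : IsPGroup p R) (hRM : R ≤ M) :
    ∃ m ∈ M, ∀ r ∈ R, m * r * m⁻¹ ∈ Q := by
  have hQ' : IsPGroup p (Q.subgroupOf M) :=
    h.2.1.of_equiv (subgroupOfEquivOfLe h.1).symm
  have hR' : IsPGroup p (R.subgroupOf M) :=
    hR.of_equiv (subgroupOfEquivOfLe hRM).symm
  let S : Sylow p M := hQ'.toSylow h.2.2
  obtain ⟨T, hT⟩ := hR'.exists_le_sylow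
  obtain ⟨m, hm⟩ := MulAction.exists_smul_eq M T S
  refine ⟨m, m.2, fun r hr => ?_⟩
  have h1 : (⟨r, hRM hr⟩ : M) ∈ T := hT (mem_subgroupOf.2 hr)
  have h2 : m * ⟨r, hRM hr⟩ * m⁻¹ ∈ S := by
    rw [← hm]
    exact smul_mem_pointwise_smul _ (MulAut.conj m) (T : Subgroup M) h1
  have h3 : m * ⟨r, hRM hr⟩ * m⁻¹ ∈ Q.subgroupOf M := h2
  simpa [mem_subgroupOf] using h3

lemma Syl.conj_mem {Q M : Subgroup G} (h : Syl p Q M) {x : G} (hx : RP.PE p x) (hxM : x ∈ M) :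
    ∃ m ∈ M, m * x * m⁻¹ ∈ Q := by
  obtain ⟨m, hm, h1⟩ := h.conj_le (R := zpowers x) (isPGroup_of_PE fun y hy => hx.zpow hy)
    (by simpa using hxM)
  exact ⟨m, hm, h1 x (mem_zpowers x)⟩

lemma Syl.card {Q M : Subgroup G} (h : Syl p Q M) :
    Nat.card Q = p ^ (Nat.card M).factorization p := by
  have hQ' : IsPGroup p (Q.subgroupOf M) :=
    h.2.1.of_equiv (subgroupOfEquivOfLe h.1).symm
  let S : Sylow p M := hQ'.toSylow h.2.2
  have := S.card_eq_multiplicity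
  rw [← this]
  exact Nat.card_congr (subgroupOfEquivOfLe h.1).symm.toEquiv

lemma Syl.conj_eq {Q M R : Subgroup G} (h : Syl p Q M) (hR : Syl p R M) :
    ∃ m ∈ M, ∀ r, r ∈ R ↔ m * r * m⁻¹ ∈ Q := by
  obtain ⟨m, hm, h1⟩ := h.conj_le hR.2.1 hR.1
  refine ⟨m, hm, ?_⟩
  have hle : R.map (MulAut.conj m).toMonoidHom ≤ Q := by
    rintro _ ⟨r, hr, rfl⟩
    exact h1 r hr
  have heq : R.map (MulAut.conj m).toMonoidHom = Q := by
    apply eq_of_le_of_card_ge hle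
    rw [h.card, ← hR.card]
    exact (Nat.card_congr (R.equivMapOfInjective _ (MulAut.conj m).injective).toEquiv).le
  intro r
  refine ⟨h1 r, fun hr => ?_⟩
  rw [← heq] at hr
  obtain ⟨s, hs, e⟩ := hr
  have : s = r := by simpa using e
  exact this ▸ hs

/-- Intersection of a Sylow subgroup with a normal subgroup. -/
lemma Syl.inf {P H M : Subgroup G} (h : Syl p P H) (hMH : M ≤ H)
    (hn : ∀ x ∈ H, ∀ m ∈ M, x * m * x⁻¹ ∈ M) : Syl p (P ⊓ M) M := by
  refine ⟨inf_le_right, h.2.1.to_le inf_le_left, ?_⟩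
  rw [inf_relIndex_right]
  obtain ⟨R, hR⟩ := Syl.exists p M
  obtain ⟨x, hx, h1⟩ := h.conj_le hR.2.1 (hR.1.trans hMH)
  have hRle : R.map (MulAut.conj x).toMonoidHom ≤ P ⊓ M := by
    rintro _ ⟨r, hr, rfl⟩
    exact ⟨h1 r hr, hn x hx r (hR.1 hr)⟩
  have hc : Nat.card (R.map (MulAut.conj x).toMonoidHom) = Nat.card R :=
    (Nat.card_congr (R.equivMapOfInjective _ (MulAut.conj x).injective).toEquiv).symm
  have e1 : ∀ K ≤ M, Nat.card K * K.relIndex M = Nat.card M := fun K hK => by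
    rw [← relIndex_bot_left, ← relIndex_bot_left, relIndex_mul_relIndex _ _ _ bot_le hK]
  have e2 := e1 _ (hRle.trans inf_le_right)
  have e3 := e1 R hR.1
  rw [hc, ← e3] at e2
  have e4 := Nat.eq_of_mul_eq_mul_left Nat.card_pos e2
  intro hd
  rw [← inf_relIndex_right] at hd
  apply hR.2.2
  rw [← e4]
  exact hd.trans (relIndex_dvd_of_le_left _ hRle)

/-- If `C ≤ H` has index prime to `p` then it contains a Sylow subgroup of `H`. -/
lemma Syl.exists_le {C H : Subgroup G} (hC : C ≤ H) (hd : ¬ p ∣ C.relIndex H) :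
    ∃ T, Syl p T H ∧ T ≤ C := by
  obtain ⟨T, hT⟩ := Syl.exists p C
  refine ⟨T, ⟨hT.1.trans hC, hT.2.1, ?_⟩, hT.1⟩
  rw [← relIndex_mul_relIndex _ _ _ hT.1 hC, (Fact.out : p.Prime).dvd_mul]
  exact not_or.2 ⟨hT.2.2, hd⟩

lemma Syl.mono {Q K M : Subgroup G} (h : Syl p Q M) (hQ : Q ≤ K) (hK : K ≤ M) : Syl p Q K := by
  refine ⟨hQ, h.2.1, fun hd => h.2.2 ?_⟩
  rw [← relIndex_mul_relIndex _ _ _ hQ hK]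
  exact hd.mul_right _

lemma Syl.conj {Q M : Subgroup G} (h : Syl p Q M) (hn : M.Normal) (g : G) :
    Syl p (Q.map (MulAut.conj g).toMonoidHom) M := by
  have e : M.map (MulAut.conj g).toMonoidHom = M := by
    ext x
    constructor
    · rintro ⟨m, hm, rfl⟩
      exact hn.conj_mem m hm g
    · intro hx
      exact ⟨g⁻¹ * x * g, by simpa using hn.conj_mem x hx g⁻¹, by simp [mul_assoc]⟩
  refine ⟨?_, h.2.1.map _, ?_⟩
  · conv_rhs => rw [← e]
    exact map_mono h.1
  · conv => rw [← e]
    rw [relIndex_map_map_of_injective _ _ (MulAut.conj g).injective]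
    exact h.2.2

/-- Fixed points of a `p`-group acting by conjugation on a finite set of size prime to `p`. -/
lemma fixed_point {T : Subgroup G} (hT : IsPGroup p T) (X : Set G)
    (hX : ∀ t ∈ T, ∀ x ∈ X, t * x * t⁻¹ ∈ X) (hc : ¬ p ∣ Nat.card X) :
    ∃ x ∈ X, T ≤ centralizer {x} := by
  letI : MulAction T X :=
    { smul := fun t x => ⟨t.1 * x.1 * t.1⁻¹, hX t.1 t.2 x.1 x.2⟩
      one_smul := fun x => Subtype.ext (by change (1 : G) * x.1 * (1 : G)⁻¹ = x.1; simp)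
      mul_smul := fun a b x => Subtype.ext (by
        change (a.1 * b.1) * x.1 * (a.1 * b.1)⁻¹ = a.1 * (b.1 * x.1 * b.1⁻¹) * a.1⁻¹
        group) }
  obtain ⟨x, hx⟩ := hT.nonempty_fixed_point_of_prime_not_dvd_card X hc
  refine ⟨x.1, x.2, fun t ht => ?_⟩
  rw [mem_centralizer_singleton_iff]
  have := congrArg Subtype.val (hx ⟨t, ht⟩)
  change t * x.1 * t⁻¹ = x.1 at this
  exact mul_inv_eq_iff_eq_mul.1 this

end sylow

section main

variable {G : Type*} [Group G] [Finite G] {p : ℕ}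

lemma count (M B : Subgroup G) (hBM : B ≤ M) (c : G) (hcB : ∀ b ∈ B, c⁻¹ * b * c ∈ B)
    (hcM : ∀ b ∈ M, c⁻¹ * b * c ∈ M)
    (hcov : ∀ g ∈ M, ∃ m ∈ M, ∃ b ∈ B, m * c * b * m⁻¹ = c * g) :
    ∀ m ∈ M, c⁻¹ * m⁻¹ * c * m ∈ B → m ∈ B := by
  have hcov' : ∀ g : M, ∃ mb : M × B, (mb.1 : G) * c * mb.2 * (mb.1 : G)⁻¹ = c * g := by
    rintro ⟨g, hg⟩
    obtain ⟨m, hm, b, hb, e⟩ := hcov g hg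
    exact ⟨(⟨m, hm⟩, ⟨b, hb⟩), e⟩
  choose σ hσ using hcov'
  let Φ : M × B → M × B := fun gb =>
    (⟨(σ gb.1).1 * gb.2, mul_mem (σ gb.1).1.2 (hBM gb.2.2)⟩,
      ⟨c⁻¹ * (gb.2 : G)⁻¹ * c * (σ gb.1).2 * gb.2,
        mul_mem (mul_mem (hcB _ (inv_mem gb.2.2)) (σ gb.1).2.2) gb.2.2⟩)
  have hΦ : ∀ gb, ((Φ gb).1 : G) * c * (Φ gb).2 * ((Φ gb).1 : G)⁻¹ = c * gb.1 := by
    intro gb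
    rw [← hσ gb.1]
    simp only [Φ]
    group
  have hinj : Function.Injective Φ := by
    rintro ⟨g, b⟩ ⟨g', b'⟩ e
    have e1 := hΦ (g, b)
    rw [e, hΦ] at e1
    have e2 : g' = g := Subtype.ext (mul_left_cancel e1)
    subst e2
    have e3 := congrArg (fun z => (z.1 : G)) e
    simp only [Φ] at e3
    have e4 : b = b' := Subtype.ext (mul_left_cancel e3)
    rw [e4]
  have hsurj := Finite.surjective_of_injective hinj
  intro m hm hb
  obtain ⟨⟨g, b⟩, e⟩ := hsurj (⟨m, hm⟩, ⟨_, hb⟩)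
  obtain ⟨⟨g', b'⟩, e'⟩ := hsurj (1, 1)
  have h1 := hΦ (g, b)
  have h2 := hΦ (g', b')
  rw [e] at h1
  rw [e'] at h2
  have hg : g = 1 := Subtype.ext (mul_left_cancel (a := c) (by rw [← h1]; simp; group))
  have hg' : g' = 1 := Subtype.ext (mul_left_cancel (a := c) (by rw [← h2]; simp))
  subst hg hg'
  have e3 := congrArg (fun z => (z.1 : G)) e
  have e3' := congrArg (fun z => (z.1 : G)) e'
  simp only [Φ, OneMemClass.coe_one] at e3 e3'
  have : m = (b' : G)⁻¹ * b := by
    rw [← e3, eq_inv_mul_iff_mul_eq, ← mul_assoc]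
    have : (b' : G) * (σ 1).1 = 1 := by
      rw [eq_inv_of_mul_eq_one_left e3']; simp
    rw [this, one_mul]
  rw [this]
  exact mul_mem (inv_mem b'.2) b.2

/-- The elements of `M` inducing inner automorphisms on `Q`. -/
def QA {G : Type*} [Group G] (Q M : Subgroup G) : Subgroup G where
  carrier := {b | b ∈ M ∧ ∃ q ∈ Q, q⁻¹ * b ∈ centralizer (Q : Set G)}
  one_mem' := ⟨one_mem _, 1, one_mem _, by simp⟩
  mul_mem' := by
    rintro a b ⟨ha, q, hq, h⟩ ⟨hb, r, hr, h'⟩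
    refine ⟨mul_mem ha hb, q * r, mul_mem hq hr, ?_⟩
    have e : (q * r)⁻¹ * (a * b) = (q⁻¹ * a) * (r⁻¹ * b) := by
      have := mem_centralizer_iff.1 h r⁻¹ (inv_mem hr)
      calc (q * r)⁻¹ * (a * b) = r⁻¹ * (q⁻¹ * a) * b := by group
        _ = (q⁻¹ * a) * r⁻¹ * b := by rw [this]
        _ = _ := by group
    rw [e]
    exact mul_mem h h'
  inv_mem' := by
    rintro a ⟨ha, q, hq, h⟩
    refine ⟨inv_mem ha, q⁻¹, inv_mem hq, ?_⟩
    have := mem_centralizer_iff.1 h q hq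
    have e : q⁻¹⁻¹ * a⁻¹ = (q⁻¹ * a)⁻¹ := by
      rw [eq_inv_iff_mul_eq_one]
      calc q⁻¹⁻¹ * a⁻¹ * (q⁻¹ * a) = q * a⁻¹ * (q⁻¹ * a * q) * q⁻¹ := by group
        _ = q * a⁻¹ * (q * (q⁻¹ * a)) * q⁻¹ := by rw [this]
        _ = 1 := by group
    rw [e]
    exact inv_mem h

lemma mem_QA {G : Type*} [Group G] {Q M : Subgroup G} {b : G} :
    b ∈ QA Q M ↔ b ∈ M ∧ ∃ q ∈ Q, q⁻¹ * b ∈ centralizer (Q : Set G) := Iff.rfl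

lemma cover [Fact p.Prime] {Q M : Subgroup G} (hM : M.Normal) (hQ : Syl p Q M) {c : G}
    (hc : c ∈ centralizer (Q : Set G)) (hcp : PR p c)
    (hall : ∀ y, PR p y → c⁻¹ * y ∈ M → ∃ R, Syl p R M ∧ R ≤ centralizer {y}) :
    ∀ m ∈ M, c⁻¹ * m⁻¹ * c * m ∈ QA Q M → m ∈ QA Q M := by
  have hcM : ∀ b ∈ M, c⁻¹ * b * c ∈ M := fun b hb => by simpa using hM.conj_mem b hb c⁻¹
  apply count M (QA Q M) (fun b hb => hb.1) c _ hcM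
  · intro g hg
    obtain ⟨x, y, hx, hy, hxy, e⟩ := decomp (Fact.out : p.Prime) (c * g)
    have himg : (QuotientGroup.mk' M) (x * y) = 1 * QuotientGroup.mk' M c := by
      rw [e, one_mul]
      exact (QuotientGroup.mk_mul_of_mem c hg)
    obtain ⟨hx1, hy1⟩ := decomp_unique (hx.map (QuotientGroup.mk' M)) (hy.map _) (hxy.map _)
      PE.one (hcp.map _) (Commute.one_left _) (by rw [← map_mul]; exact himg)
    have hxM : x ∈ M := (QuotientGroup.eq_one_iff x).1 hx1
    have hyM : c⁻¹ * y ∈ M := QuotientGroup.eq.1 hy1.symm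
    obtain ⟨R, hR, hRy⟩ := hall y hy hyM
    obtain ⟨m, hm, hmR⟩ := hQ.conj_eq hR
    have hy' : m * y * m⁻¹ ∈ centralizer (Q : Set G) := by
      rw [mem_centralizer_iff]
      intro q hq
      have h1 : m⁻¹ * q * m ∈ R := (hmR _).2 (by simpa [mul_assoc] using hq)
      have h2 := mem_centralizer_singleton_iff.1 (hRy h1)
      calc q * (m * y * m⁻¹) = m * ((m⁻¹ * q * m) * y) * m⁻¹ := by group
        _ = m * (y * (m⁻¹ * q * m)) * m⁻¹ := by rw [h2]
        _ = _ := by group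
    set y' := m * y * m⁻¹ with hy'def
    set x' := m * x * m⁻¹ with hx'def
    have hQK : Syl p Q (M ⊓ centralizer {y'}) := by
      refine hQ.mono (le_inf hQ.1 fun q hq => ?_) inf_le_left
      rw [mem_centralizer_singleton_iff]
      exact mem_centralizer_iff.1 hy' q hq
    have hx'K : x' ∈ M ⊓ centralizer {y'} := by
      refine mem_inf.2 ⟨hM.conj_mem x hxM m, ?_⟩
      rw [mem_centralizer_singleton_iff, hx'def, hy'def]
      have := hxy.eq
      calc m * x * m⁻¹ * (m * y * m⁻¹) = m * (x * y) * m⁻¹ := by group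
        _ = m * (y * x) * m⁻¹ := by rw [this]
        _ = _ := by group
    obtain ⟨k, hk, hkQ⟩ := hQK.conj_mem (hx.conj m) hx'K
    have hky : k * y' * k⁻¹ = y' := by
      rw [mul_inv_eq_iff_eq_mul]
      exact mem_centralizer_singleton_iff.1 hk.2
    set q := k * x' * k⁻¹ with hq
    have hcq : c⁻¹ * q = q * c⁻¹ :=
      (mem_centralizer_iff.1 (inv_mem hc) q hkQ).symm
    have hcy' : c⁻¹ * y' ∈ M := by
      have : c⁻¹ * y' = (c⁻¹ * m * c) * (c⁻¹ * y) * m⁻¹ := by rw [hy'def]; group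
      rw [this]
      exact mul_mem (mul_mem (hcM m hm) hyM) (inv_mem hm)
    refine ⟨(k * m)⁻¹, inv_mem (mul_mem hk.1 hm), c⁻¹ * (q * y'), ⟨?_, q, hkQ, ?_⟩, ?_⟩
    · rw [← mul_assoc, hcq, mul_assoc]
      exact mul_mem (hQ.1 hkQ) hcy'
    · rw [← mul_assoc c⁻¹, hcq, mul_assoc, inv_mul_cancel_left]
      exact mul_mem (inv_mem hc) hy'
    · rw [← e]
      conv_lhs => rw [← hky]
      rw [hq, hx'def, hy'def]
      group
  · rintro b ⟨hb, q, hq, h⟩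
    refine ⟨hcM b hb, q, hq, ?_⟩
    have hcq : q⁻¹ * c⁻¹ = c⁻¹ * q⁻¹ :=
      (mem_centralizer_iff.1 (inv_mem hc) q⁻¹ (inv_mem hq))
    have : q⁻¹ * (c⁻¹ * b * c) = c⁻¹ * (q⁻¹ * b) * c := by
      rw [← mul_assoc, ← mul_assoc, hcq]; group
    rw [this]
    exact mul_mem (mul_mem (inv_mem hc) h) hc

lemma burnside [Fact p.Prime] {Q M : Subgroup G} (hQ : Syl p Q M)
    (h : ∀ n ∈ M, (∀ q, q ∈ Q ↔ n * q * n⁻¹ ∈ Q) → ∀ q ∈ Q, q * n = n * q) :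
    ∃ K ≤ M, ¬ p ∣ Nat.card K ∧ ∀ x ∈ M, PR p x → x ∈ K := by
  have hQ' : IsPGroup p (Q.subgroupOf M) :=
    hQ.2.1.of_equiv (subgroupOfEquivOfLe hQ.1).symm
  let S : Sylow p M := hQ'.toSylow hQ.2.2
  have hS : Subgroup.normalizer (S : Set M) ≤ centralizer (S : Set M) := by
    intro n hn
    rw [mem_centralizer_iff]
    intro q hq
    apply Subtype.ext
    refine h n n.2 (fun r => ?_) q hq
    replace hn := (mem_normalizer_iff (H := (S : Subgroup M))).1 hn
    constructor
    · intro hr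
      exact (hn ⟨r, hQ.1 hr⟩).1 hr
    · intro hr
      have hrM : r ∈ M := by
        have := mul_mem (mul_mem (inv_mem n.2) (hQ.1 hr)) n.2
        simpa [mul_assoc] using this
      exact (hn ⟨r, hrM⟩).2 hr
  refine ⟨(MonoidHom.transferSylow S hS).ker.map M.subtype, map_subtype_le _, ?_, ?_⟩
  · rw [Nat.card_congr (equivMapOfInjective _ _ M.subtype_injective).toEquiv.symm]
    exact MonoidHom.not_dvd_card_ker_transferSylow S hS
  · intro x hx hpx
    have hpx' : PR p (⟨x, hx⟩ : M) := PR.of_map M.subtype M.subtype_injective hpx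
    refine ⟨⟨x, hx⟩, ?_, rfl⟩
    change _ ∈ MonoidHom.ker _
    rw [MonoidHom.mem_ker]
    exact eq_one_of_PE_PR (S.2 _) (hpx'.map _)

end main

section main2

variable {G : Type*} [Group G] [Finite G] {p : ℕ}

/-- The inductive hypothesis on the group. -/
structure HH (p a : ℕ) (G : Type*) [Group G] : Prop where
  h1 : ∀ x : G, PE p x → ¬ p ∣ (centralizer {x}).index
  h2 : ∀ x y : G, PE p x → PR p y → Commute x y → p ∣ (centralizer {y}).index →
    (centralizer {x * y}).index.factorization p = a

lemma not_dvd_of_factorization_eq [Fact p.Prime] {C H : Subgroup G} (hC : C ≤ H)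
    (h : C.index.factorization p = H.index.factorization p) : ¬ p ∣ C.relIndex H := by
  have e := relIndex_mul_index hC
  have h1 : C.relIndex H ≠ 0 := fun h0 => by
    rw [h0, zero_mul] at e; exact index_ne_zero_of_finite e.symm
  rw [← e, Nat.factorization_mul h1 index_ne_zero_of_finite, Finsupp.add_apply] at h
  have h2 : (C.relIndex H).factorization p = 0 := by omega
  intro hd
  have := (Fact.out : p.Prime).factorization_pos_of_dvd h1 hd
  omega

lemma factorization_eq_of_not_dvd [Fact p.Prime] {C H : Subgroup G} (hC : C ≤ H)
    (h : ¬ p ∣ C.relIndex H) : C.index.factorization p = H.index.factorization p := by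
  have e := relIndex_mul_index hC
  have h1 : C.relIndex H ≠ 0 := fun h0 => by
    rw [h0, zero_mul] at e; exact index_ne_zero_of_finite e.symm
  rw [← e, Nat.factorization_mul h1 index_ne_zero_of_finite, Finsupp.add_apply,
    Nat.factorization_eq_zero_of_not_dvd h, zero_add]

/-- Preimage of the centralizer of `cM`. -/
def HC {G : Type*} [Group G] (M : Subgroup G) [M.Normal] (c : G) : Subgroup G :=
  (centralizer {(QuotientGroup.mk' M c)}).comap (QuotientGroup.mk' M)

lemma HC_index (M : Subgroup G) [M.Normal] (c : G) :
    (HC M c).index = (centralizer {(QuotientGroup.mk' M c)}).index :=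
  index_comap_of_surjective _ (QuotientGroup.mk'_surjective M)

lemma mem_HC {M : Subgroup G} [hM : M.Normal] {c g : G} :
    g ∈ HC M c ↔ c⁻¹ * (g * c * g⁻¹) ∈ M := by
  rw [HC, mem_comap, mem_centralizer_singleton_iff, ← map_mul, ← map_mul]
  change (QuotientGroup.mk (g * c) : G ⧸ M) = QuotientGroup.mk (c * g) ↔ _
  rw [eq_comm, QuotientGroup.eq]
  have : c⁻¹ * (g * c * g⁻¹) = g * ((c * g)⁻¹ * (g * c)) * g⁻¹ := by group
  rw [this]
  exact (hM.mem_comm_iff.trans (by rw [inv_mul_cancel_left])).symm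

lemma centralizer_le_HC {M : Subgroup G} [M.Normal] {c : G} : centralizer {c} ≤ HC M c := by
  intro g hg
  rw [mem_HC, mul_inv_eq_iff_eq_mul.2 (mem_centralizer_singleton_iff.1 hg), inv_mul_cancel]
  exact one_mem _

lemma le_HC {M : Subgroup G} [hM : M.Normal] {c : G} : M ≤ HC M c := by
  intro g hg
  rw [mem_HC]
  have : c⁻¹ * (g * c * g⁻¹) = (c⁻¹ * g * c⁻¹⁻¹) * g⁻¹ := by group
  rw [this]
  exact mul_mem (hM.conj_mem g hg c⁻¹) (inv_mem hg)

/-- `G = M C_G(Q)`. -/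
lemma sup_eq_top [Fact p.Prime] {a : ℕ} (hG : HH p a G)
    (hgen : ∀ N : Subgroup G, (∀ x, PE p x → x ∈ N) → N = ⊤)
    {M Q : Subgroup G} (hM : M.Normal) (hQ : Syl p Q M) :
    M ⊔ centralizer (Q : Set G) = ⊤ := by
  apply hgen
  intro x hx
  obtain ⟨P, hP, hPx⟩ := Syl.exists_le (p := p) (C := centralizer {x}) (H := ⊤) le_top
    (by rw [relIndex_top_right]; exact hG.h1 x hx)
  have hR : Syl p (P ⊓ M) M := hP.inf le_top fun g _ m hm => hM.conj_mem m hm g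
  obtain ⟨m, hm, hmR⟩ := hQ.conj_eq hR
  have hc : m * x * m⁻¹ ∈ centralizer (Q : Set G) := by
    rw [mem_centralizer_iff]
    intro q hq
    have h1 : m⁻¹ * q * m ∈ P ⊓ M := (hmR _).2 (by simpa [mul_assoc] using hq)
    have h2 := mem_centralizer_singleton_iff.1 (hPx h1.1)
    calc q * (m * x * m⁻¹) = m * ((m⁻¹ * q * m) * x) * m⁻¹ := by group
      _ = m * (x * (m⁻¹ * q * m)) * m⁻¹ := by rw [h2]
      _ = _ := by group
  have : x = m⁻¹ * (m * x * m⁻¹) * m := by group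
  rw [this]
  have hm' : m ∈ M ⊔ centralizer (Q : Set G) := mem_sup_left hm
  exact mul_mem (mul_mem (inv_mem hm') (mem_sup_right hc)) hm'

/-- The number of elements of order prime to `p` in the coset `c C_M(Q)` is prime to `p`. -/
lemma card_X [Fact p.Prime] {M Q : Subgroup G} (hM : M.Normal) (hQ : Syl p Q M) {c : G}
    (hc : c ∈ centralizer (Q : Set G)) (hcp : PR p c) :
    ¬ p ∣ Nat.card {y : G | PR p y ∧ y ∈ centralizer (Q : Set G) ∧ c⁻¹ * y ∈ M} := by
  set X := {y : G | PR p y ∧ y ∈ centralizer (Q : Set G) ∧ c⁻¹ * y ∈ M} with hX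
  set A := M ⊓ centralizer (Q : Set G) with hA
  have hZ : Syl p (Q ⊓ A) A := by
    have hN : Syl p Q (M ⊓ normalizer (Q : Set G)) :=
      hQ.mono (le_inf hQ.1 le_normalizer) inf_le_left
    refine hN.inf (inf_le_inf_left _ ?_) ?_
    · exact centralizer_le_normalizer _
    · rintro x hx m hm
      refine mem_inf.2 ⟨hM.conj_mem m (mem_inf.1 hm).1 x, ?_⟩
      rw [mem_centralizer_iff]
      intro q hq
      have h1 : x⁻¹ * q * x ∈ Q := by
        have := (mem_normalizer_iff.1 (inv_mem (mem_inf.1 hx).2) q).1 hq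
        simpa using this
      have h2 := mem_centralizer_iff.1 (mem_inf.1 hm).2 _ h1
      calc q * (x * m * x⁻¹) = x * ((x⁻¹ * q * x) * m) * x⁻¹ := by group
        _ = x * (m * (x⁻¹ * q * x)) * x⁻¹ := by rw [h2]
        _ = _ := by group
  have hPA : ∀ x ∈ A, PE p x → x ∈ Q ⊓ A := by
    intro x hx hpx
    obtain ⟨m, hm, h⟩ := hZ.conj_mem hpx hx
    have := mem_centralizer_iff.1 (mem_inf.1 hm).2 _ (mem_inf.1 h).1
    have e : m * x * m⁻¹ = x := by
      have e2 : m * x * m⁻¹ * m = m * x := by group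
      rw [e2] at this
      exact (mul_left_cancel this).symm
    rwa [e] at h
  let F : X × (Q ⊓ A : Subgroup G) → A := fun yz =>
    ⟨c⁻¹ * (yz.2 * yz.1), by
      have h1 := yz.1.2
      have h2 := yz.2.2
      have e : c⁻¹ * ((yz.2 : G) * yz.1) = yz.2 * (c⁻¹ * yz.1) := by
        have := mem_centralizer_iff.1 (inv_mem hc) _ (mem_inf.1 h2).1
        rw [← mul_assoc, ← this, mul_assoc]
      rw [e]
      exact mul_mem (mem_inf.1 h2).2 (mem_inf.2 ⟨h1.2.2, mul_mem (inv_mem hc) h1.2.1⟩)⟩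
  have hcomm : ∀ (y : X) (z : (Q ⊓ A : Subgroup G)), Commute (z : G) (y : G) := fun y z =>
    mem_centralizer_iff.1 y.2.2.1 z (mem_inf.1 z.2).1
  have hPZ : ∀ (z : (Q ⊓ A : Subgroup G)), PE p (z : G) := fun z => hQ.PE (mem_inf.1 z.2).1
  have hbij : Function.Bijective F := by
    constructor
    · rintro ⟨y, z⟩ ⟨y', z'⟩ e
      have e1 : (z : G) * y = z' * y' := mul_left_cancel (congrArg Subtype.val e)
      obtain ⟨h1, h2⟩ := decomp_unique (hPZ z) y.2.1 (hcomm y z) (hPZ z') y'.2.1 (hcomm y' z') e1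
      exact Prod.ext (Subtype.ext h2) (Subtype.ext h1)
    · rintro ⟨g, hg⟩
      obtain ⟨x, y, hx, hy, hxy, e⟩ := decomp (Fact.out : p.Prime) (c * g)
      have himg : (QuotientGroup.mk' M) (x * y) = 1 * QuotientGroup.mk' M c := by
        rw [e, one_mul]
        exact (QuotientGroup.mk_mul_of_mem c (mem_inf.1 hg).1)
      obtain ⟨hx1, hy1⟩ := decomp_unique (hx.map (QuotientGroup.mk' M)) (hy.map _) (hxy.map _)
        PE.one (hcp.map _) (Commute.one_left _) (by rw [← map_mul]; exact himg)
      have hxM : x ∈ M := (QuotientGroup.eq_one_iff x).1 hx1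
      have hyM : c⁻¹ * y ∈ M := QuotientGroup.eq.1 hy1.symm
      have hcg : zpowers (x * y) ≤ centralizer (Q : Set G) := by
        rw [e, zpowers_le]
        exact mul_mem hc (mem_inf.1 hg).2
      obtain ⟨r1, r2⟩ := recover hx hy hxy
      refine ⟨(⟨y, hy, hcg r2, hyM⟩, ⟨x, hPA x (mem_inf.2 ⟨hxM, hcg r1⟩) hx⟩), ?_⟩
      apply Subtype.ext
      change c⁻¹ * (x * y) = g
      rw [e, inv_mul_cancel_left]
  have hcard := Nat.card_congr (Equiv.ofBijective F hbij)
  rw [Nat.card_prod] at hcard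
  have e1 : Nat.card (Q ⊓ A : Subgroup G) * (Q ⊓ A).relIndex A = Nat.card A := by
    rw [← relIndex_bot_left, ← relIndex_bot_left, relIndex_mul_relIndex _ _ _ bot_le hZ.1]
  rw [mul_comm, ← e1] at hcard
  rw [Nat.eq_of_mul_eq_mul_left Nat.card_pos hcard]
  exact hZ.2.2

end main2

section main3

variable {G : Type*} [Group G] [Finite G] {p : ℕ}

lemma PE.of_not_dvd_card [Fact p.Prime] {K : Subgroup G} (h : ¬ p ∣ Nat.card K) {x : G}
    (hx : x ∈ K) : PR p x := by
  refine ⟨Nat.card K, ((Fact.out : p.Prime).coprime_iff_not_dvd).2 h, ?_⟩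
  have := pow_card_eq_one' (x := (⟨x, hx⟩ : K))
  exact congrArg Subtype.val this

lemma conj_mem_centralizer {Q : Subgroup G} {t x : G} (ht : ∀ q ∈ Q, t⁻¹ * q * t ∈ Q)
    (hx : x ∈ centralizer (Q : Set G)) : t * x * t⁻¹ ∈ centralizer (Q : Set G) := by
  rw [mem_centralizer_iff]
  intro q hq
  have h2 := mem_centralizer_iff.1 hx _ (ht q hq)
  calc q * (t * x * t⁻¹) = t * ((t⁻¹ * q * t) * x) * t⁻¹ := by group
    _ = t * (x * (t⁻¹ * q * t)) * t⁻¹ := by rw [h2]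
    _ = _ := by group

/-- elements of `QA` normalize `Q`. -/
lemma QA_norm {Q M : Subgroup G} {b : G} (hb : b ∈ QA Q M) {x : G} (hx : x ∈ Q) :
    b * x * b⁻¹ ∈ Q := by
  obtain ⟨-, q, hq, h⟩ := mem_QA.1 hb
  have h2 := mem_centralizer_iff.1 h x hx
  have : b * x * b⁻¹ = q * x * q⁻¹ := by
    calc b * x * b⁻¹ = q * ((q⁻¹ * b) * x) * b⁻¹ := by group
      _ = q * (x * (q⁻¹ * b)) * b⁻¹ := by rw [h2]
      _ = _ := by group
  rw [this]
  exact mul_mem (mul_mem hq hx) (inv_mem hq)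

lemma main_lemma [Fact p.Prime] {a : ℕ} (hG : HH p a G)
    (hgen : ∀ N : Subgroup G, (∀ x, PE p x → x ∈ N) → N = ⊤)
    (M : Subgroup G) [hM : M.Normal] (hne : M ≠ ⊥)
    (hp' : ∀ N : Subgroup G, N.Normal → ¬ p ∣ Nat.card N → N = ⊥)
    (hpp : ∀ N : Subgroup G, N.Normal → IsPGroup p N → N = ⊥)
    (z : G ⧸ M) (hz : PR p z) : ¬ p ∣ (centralizer {z}).index := by
  intro hd
  have hp : p.Prime := Fact.out
  obtain ⟨g, rfl⟩ := QuotientGroup.mk'_surjective M z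
  rw [← HC_index] at hd
  obtain ⟨T, hT⟩ := Syl.exists p (HC M g)
  have hQ : Syl p (T ⊓ M) M := hT.inf le_HC (fun x _ m hm => hM.conj_mem m hm x)
  set Q := T ⊓ M with hQdef
  have hTQ : ∀ t ∈ T, ∀ q ∈ Q, t⁻¹ * q * t ∈ Q := by
    intro t ht q hq
    refine mem_inf.2 ⟨mul_mem (mul_mem (inv_mem ht) hq.1) ht, ?_⟩
    have := hM.conj_mem q hq.2 t⁻¹
    rwa [inv_inv] at this
  obtain ⟨c, hcp, hcQ, hcg⟩ : ∃ c, PR p c ∧ c ∈ centralizer (Q : Set G) ∧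
      QuotientGroup.mk' M c = QuotientGroup.mk' M g := by
    have ht : g ∈ M ⊔ centralizer (Q : Set G) := by
      rw [sup_eq_top hG hgen hM hQ]; exact mem_top _
    obtain ⟨m, hm, d, hdQ, e⟩ := mem_sup_of_normal_left.1 ht
    have e2 : QuotientGroup.mk' M d = 1 * QuotientGroup.mk' M g := by
      rw [← e, map_mul, one_mul]
      have : QuotientGroup.mk' M m = 1 := (QuotientGroup.eq_one_iff m).2 hm
      rw [this, one_mul]
    obtain ⟨x, y, hx, hy, hxy, exy, -, hyg⟩ :=
      lift_pair hp (QuotientGroup.mk' M) d PE.one hz (Commute.one_left _) e2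
    refine ⟨y, hy, ?_, hyg⟩
    have h1 := (recover hx hy hxy).2
    rw [exy] at h1
    exact (zpowers_le.2 hdQ) h1
  have hHc : HC M c = HC M g := by unfold HC; rw [hcg]
  obtain ⟨c1, ⟨hc1p, hc1Q, hc1M⟩, hTc⟩ := fixed_point hT.2.1
    {y : G | PR p y ∧ y ∈ centralizer (Q : Set G) ∧ c⁻¹ * y ∈ M} (by
      rintro t ht x ⟨hx, hxQ, hxM⟩
      refine ⟨hx.conj t, conj_mem_centralizer (hTQ t ht) hxQ, ?_⟩
      have h1 := hT.1 ht
      rw [← hHc, mem_HC] at h1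
      have h2 := mul_mem h1 (hM.conj_mem _ hxM t)
      convert h2 using 1
      group) (card_X hM hQ hcQ hcp)
  have hHeq : ∀ y, c1⁻¹ * y ∈ M → HC M y = HC M g := by
    intro y hy
    rw [← hHc]
    have h1 : QuotientGroup.mk' M c = QuotientGroup.mk' M c1 := QuotientGroup.eq.2 hc1M
    have h2 : QuotientGroup.mk' M c1 = QuotientGroup.mk' M y := QuotientGroup.eq.2 hy
    unfold HC
    rw [h1, h2]
  have hle : ∀ y, c1⁻¹ * y ∈ M → centralizer {y} ≤ HC M g := fun y hy =>
    hHeq y hy ▸ centralizer_le_HC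
  have hdvd : ∀ y, c1⁻¹ * y ∈ M → p ∣ (centralizer {y}).index := fun y hy =>
    hd.trans (index_dvd_of_le (hle y hy))
  have hv : ∀ y, PR p y → c1⁻¹ * y ∈ M → (centralizer {y}).index.factorization p = a := by
    intro y hy hyM
    have := hG.h2 1 y PE.one hy (Commute.one_left _) (hdvd y hyM)
    rwa [one_mul] at this
  have h11 : c1⁻¹ * c1 ∈ M := by rw [inv_mul_cancel]; exact one_mem _
  have hHa : (HC M g).index.factorization p = a := by
    rw [← factorization_eq_of_not_dvd (hle c1 h11), hv c1 hc1p h11]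
    exact fun h => hT.2.2 (h.trans (relIndex_dvd_of_le_left _ hTc))
  have hcov := cover hM hQ hc1Q hc1p (by
    intro y hy hyM
    obtain ⟨R, hR, hRy⟩ := Syl.exists_le (p := p) (hle y hyM)
      (not_dvd_of_factorization_eq (hle y hyM) (by rw [hv y hy hyM, hHa]))
    exact ⟨R ⊓ M, hR.inf le_HC (fun x _ m hm => hM.conj_mem m hm x), inf_le_left.trans hRy⟩)
  have hQc1 : Q ≤ centralizer {c1} := inf_le_left.trans hTc
  -- Q is abelian
  have hab : ∀ x ∈ Q, ∀ q ∈ Q, q * x = x * q := by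
    intro x hx
    have hxc : Commute x c1 := mem_centralizer_singleton_iff.1 (hQc1 hx)
    have hxp : PE p x := hQ.PE hx
    have hcm := cent_mul hxp hc1p hxc
    have hle2 : centralizer {x * c1} ≤ centralizer {c1} := by rw [hcm]; exact inf_le_right
    have hnd : ¬ p ∣ (centralizer {x * c1}).relIndex (centralizer {c1}) :=
      not_dvd_of_factorization_eq hle2 (by
        rw [hG.h2 x c1 hxp hc1p hxc (hdvd c1 h11), hv c1 hc1p h11])
    obtain ⟨R, hR, hRx⟩ := Syl.exists_le hle2 hnd
    have hR' : Syl p (R ⊓ (centralizer {c1} ⊓ M)) (centralizer {c1} ⊓ M) :=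
      hR.inf inf_le_left (fun y hy m hm => mem_inf.2 ⟨mul_mem (mul_mem hy hm.1) (inv_mem hy),
        hM.conj_mem m hm.2 y⟩)
    have hQ' : Syl p Q (centralizer {c1} ⊓ M) :=
      hQ.mono (le_inf hQc1 inf_le_right) inf_le_right
    obtain ⟨m, hm, hmR⟩ := hR'.conj_eq hQ'
    have hmQ : m ∈ QA Q M := hcov m hm.2 (by
      have e := mem_centralizer_singleton_iff.1 hm.1
      have : c1⁻¹ * m⁻¹ * c1 * m = 1 := by
        rw [mul_assoc _ c1 m, ← e]; group
      rw [this]; exact one_mem _)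
    intro q hq
    have h1 : m * (m⁻¹ * q * m) * m⁻¹ ∈ R ⊓ (centralizer {c1} ⊓ M) := by
      rw [← hmR]
      have := QA_norm (inv_mem hmQ) hq
      rwa [inv_inv] at this
    have h2 := hRx h1.1
    rw [hcm] at h2
    have h3 := mem_centralizer_singleton_iff.1 h2.1
    have e : m * (m⁻¹ * q * m) * m⁻¹ = q := by group
    rwa [e] at h3
  obtain ⟨K, hKM, hKp, hK⟩ := burnside hQ (by
    intro n hn hnQ
    have hnQ' : ∀ q ∈ Q, n⁻¹ * q * n ∈ Q := fun q hq => by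
      rw [hnQ]
      have : n * (n⁻¹ * q * n) * n⁻¹ = q := by group
      rwa [this]
    have hmem : n ∈ QA Q M := by
      apply hcov n hn
      rw [mem_QA]
      have e : c1⁻¹ * n⁻¹ * c1 * n = c1⁻¹ * (n⁻¹ * c1 * n⁻¹⁻¹) := by group
      refine ⟨?_, 1, one_mem _, ?_⟩
      · have e : c1⁻¹ * n⁻¹ * c1 * n = (c1⁻¹ * n⁻¹ * c1⁻¹⁻¹) * n := by group
        rw [e]
        exact mul_mem (hM.conj_mem _ (inv_mem hn) _) hn
      · rw [inv_one, one_mul, e]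
        refine mul_mem (inv_mem hc1Q) (conj_mem_centralizer (fun q hq => ?_) hc1Q)
        rw [inv_inv]
        exact (hnQ q).1 hq
    obtain ⟨-, r, hr, h⟩ := mem_QA.1 hmem
    intro q hq
    have h1 := mem_centralizer_iff.1 h q hq
    have h2 := hab r hr q hq
    calc q * n = (q * r) * (r⁻¹ * n) := by group
      _ = r * (q * (r⁻¹ * n)) := by rw [h2, mul_assoc]
      _ = r * (r⁻¹ * n * q) := by rw [h1]
      _ = n * q := by group)
  have hKn : K.Normal := ⟨fun x hx y =>
    hK _ (hM.conj_mem x (hKM hx) y) ((PE.of_not_dvd_card hKp hx).conj y)⟩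
  have hKb := hp' K hKn hKp
  apply hne
  apply hpp M hM
  apply isPGroup_of_PE
  intro x hx
  obtain ⟨u, v, hu, hv', huv, e⟩ := decomp hp x
  have hvM : v ∈ M := by
    have := (recover hu hv' huv).2
    rw [e] at this
    exact (zpowers_le.2 hx) this
  have := hK v hvM hv'
  rw [hKb, mem_bot] at this
  rw [this, mul_one] at e
  rwa [← e]

/-- Step 2. -/
lemma pgroup_of_all [Fact p.Prime]
    (hgen : ∀ N : Subgroup G, (∀ x, PE p x → x ∈ N) → N = ⊤)
    (hall : ∀ y : G, PR p y → ¬ p ∣ (centralizer {y}).index) : IsPGroup p G := by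
  obtain ⟨P, hP⟩ := Syl.exists p (⊤ : Subgroup G)
  have hcov := cover (c := (1 : G)) (by infer_instance) hP (one_mem _) PR.one (by
    intro y hy _
    obtain ⟨T, hT, h⟩ := Syl.exists_le (p := p) (C := centralizer {y}) (H := ⊤) le_top
      (by rw [relIndex_top_right]; exact hall y hy)
    exact ⟨T, hT, h⟩)
  have hall' : ∀ m : G, m ∈ QA P ⊤ := fun m => hcov m (mem_top _) (by
    have : (1 : G)⁻¹ * m⁻¹ * 1 * m = 1 := by group
    rw [this]; exact one_mem _)
  have hPt : P = ⊤ := hgen P fun x hx => by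
    obtain ⟨m, -, h⟩ := hP.conj_mem hx (mem_top _)
    have := QA_norm (hall' m⁻¹) h
    have e : m⁻¹ * (m * x * m⁻¹) * m⁻¹⁻¹ = x := by group
    rwa [e] at this
  intro x
  exact hP.PE (x := x) (by rw [hPt]; exact mem_top _)

end main3

section inherit

variable {G : Type*} [Group G] [Finite G] {p : ℕ}

lemma dvd_iff_fact [Fact p.Prime] {n : ℕ} (hn : n ≠ 0) : p ∣ n ↔ n.factorization p ≠ 0 := by
  constructor
  · intro h
    have := (Fact.out : p.Prime).factorization_pos_of_dvd hn h
    omega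
  · intro h
    by_contra h1
    exact h (Nat.factorization_eq_zero_of_not_dvd h1)

lemma fact_sub [Fact p.Prime] (C N : Subgroup G) [N.Normal] (h : ¬ p ∣ N.index) :
    (C.relIndex N).factorization p = C.index.factorization p := by
  have h1 : (C ⊓ N).index.factorization p = C.index.factorization p := by
    apply factorization_eq_of_not_dvd inf_le_left
    rw [inf_relIndex_left]
    exact fun hd => h (hd.trans (relIndex_dvd_index_of_normal N C))
  have h2 := relIndex_mul_index (inf_le_right : C ⊓ N ≤ N)
  rw [inf_relIndex_right] at h2
  have h3 : C.relIndex N ≠ 0 := fun h0 => by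
    rw [h0, zero_mul] at h2; exact index_ne_zero_of_finite h2.symm
  rw [← h1, ← h2, Nat.factorization_mul h3 index_ne_zero_of_finite, Finsupp.add_apply,
    Nat.factorization_eq_zero_of_not_dvd h, add_zero]

lemma centralizer_sub (N : Subgroup G) (x : N) :
    (centralizer {x}).index = (centralizer {(x : G)}).relIndex N := by
  have : centralizer {x} = (centralizer {(x : G)}).subgroupOf N := by
    ext g
    rw [mem_subgroupOf, mem_centralizer_singleton_iff, mem_centralizer_singleton_iff]
    exact Subtype.ext_iff
  rw [this]; rfl

lemma HH.sub [Fact p.Prime] {a : ℕ} (hG : HH p a G) (N : Subgroup G) [N.Normal]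
    (h : ¬ p ∣ N.index) : HH p a N := by
  have key : ∀ x : N, (centralizer {x}).index.factorization p =
      (centralizer {(x : G)}).index.factorization p := fun x => by
    rw [centralizer_sub, fact_sub _ _ h]
  have key2 : ∀ x : N, p ∣ (centralizer {x}).index ↔ p ∣ (centralizer {(x : G)}).index :=
    fun x => by
      rw [dvd_iff_fact index_ne_zero_of_finite, dvd_iff_fact index_ne_zero_of_finite, key]
  refine ⟨fun x hx => ?_, fun x y hx hy hxy hd => ?_⟩
  · rw [key2]
    exact hG.h1 _ (hx.map N.subtype)
  · rw [key]
    exact hG.h2 _ _ (hx.map N.subtype) (hy.map N.subtype) (hxy.map N.subtype) ((key2 y).1 hd)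

lemma HC_congr {N : Subgroup G} [N.Normal] {g z : G}
    (h : QuotientGroup.mk' N g = QuotientGroup.mk' N z) : HC N g = HC N z := by
  unfold HC; rw [h]

lemma index_quot_dvd (N : Subgroup G) [N.Normal] (g : G) :
    (centralizer {QuotientGroup.mk' N g}).index ∣ (centralizer {g}).index := by
  rw [← HC_index]; exact index_dvd_of_le centralizer_le_HC

lemma HH.quot_h1 [Fact p.Prime] {a : ℕ} (hG : HH p a G) (N : Subgroup G) [N.Normal]
    (x : G ⧸ N) (hx : PE p x) : ¬ p ∣ (centralizer {x}).index := by
  obtain ⟨g, hg⟩ := QuotientGroup.mk'_surjective N x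
  obtain ⟨u, v, hu, hv, huv, e, h1, h2⟩ := lift_pair (Fact.out : p.Prime) (QuotientGroup.mk' N) g
    hx PR.one (Commute.one_right _) (by rw [hg, mul_one])
  rw [← h1]
  exact fun hd => hG.h1 u hu (hd.trans (index_quot_dvd N u))

lemma HH.quot_p' [Fact p.Prime] {a : ℕ} (hG : HH p a G) (N : Subgroup G) [hN : N.Normal]
    (h : ¬ p ∣ Nat.card N) : HH p a (G ⧸ N) := by
  refine ⟨hG.quot_h1 N, fun x y hx hy hxy hd => ?_⟩
  obtain ⟨g, hg⟩ := QuotientGroup.mk'_surjective N (x * y)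
  obtain ⟨T, hT⟩ := Syl.exists p (HC N g)
  have hcard : Nat.card {z : G | g⁻¹ * z ∈ N} = Nat.card N :=
    Nat.card_congr ⟨fun z => ⟨g⁻¹ * z, z.2⟩, fun n => ⟨g * n, by simp⟩,
      fun z => by simp, fun n => by simp⟩
  obtain ⟨z, hz, hTz⟩ := fixed_point hT.2.1 {z : G | g⁻¹ * z ∈ N} (by
    intro t ht z hz
    have h1 := mem_HC.1 (hT.1 ht)
    have h2 := mul_mem h1 (hN.conj_mem _ hz t)
    change g⁻¹ * (t * z * t⁻¹) ∈ N
    convert h2 using 1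
    group) (by rwa [hcard])
  have hzg : QuotientGroup.mk' N g = QuotientGroup.mk' N z := QuotientGroup.eq.2 hz
  rw [← hg, ← HC_index]
  obtain ⟨u, v, hu, hv, huv, e, h1, h2⟩ := lift_pair (Fact.out : p.Prime) (QuotientGroup.mk' N) z
    hx hy hxy (by rw [← hzg, hg])
  rw [← h2] at hd
  have h3 := hG.h2 u v hu hv huv (hd.trans (index_quot_dvd N v))
  rw [e] at h3
  have hle : centralizer {z} ≤ HC N g := by
    rw [HC_congr hzg]; exact centralizer_le_HC
  rw [← h3, factorization_eq_of_not_dvd hle]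
  exact fun h => hT.2.2 (h.trans (relIndex_dvd_of_le_left _ hTz))

lemma fact_le_of_dvd {m n : ℕ} (hn : n ≠ 0) (h : m ∣ n) :
    m.factorization p ≤ n.factorization p := by
  have hm : m ≠ 0 := fun h0 => hn (by rw [h0] at h; exact Nat.eq_zero_of_zero_dvd h)
  exact (Nat.factorization_le_iff_dvd hm hn).2 h p

lemma HH.quot_central [Fact p.Prime] {a : ℕ} (hG : HH p a G) (N : Subgroup G) [hN : N.Normal]
    (h : IsPGroup p N) (hc : ∀ n ∈ N, ∀ g : G, n * g = g * n) : HH p a (G ⧸ N) := by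
  refine ⟨hG.quot_h1 N, fun x y hx hy hxy hd => ?_⟩
  obtain ⟨g, hg⟩ := QuotientGroup.mk'_surjective N (x * y)
  obtain ⟨u, v, hu, hv, huv, e, h1, h2⟩ := lift_pair (Fact.out : p.Prime) (QuotientGroup.mk' N) g
    hx hy hxy hg
  have hHC : HC N v = centralizer {v} := by
    refine le_antisymm (fun w hw => ?_) centralizer_le_HC
    rw [mem_HC] at hw
    rw [mem_centralizer_singleton_iff]
    have hz : PE p (v⁻¹ * (w * v * w⁻¹)) := by
      obtain ⟨k, hk⟩ := h ⟨_, hw⟩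
      exact ⟨k, congrArg Subtype.val hk⟩
    have e1 : v⁻¹ * (w * v * w⁻¹) * v = 1 * (w * v * w⁻¹) := by
      rw [hc _ hw v]; group
    have h3 := (decomp_unique hz hv (hc _ hw v) PE.one (hv.conj w) (Commute.one_left _) e1).2
    calc w * v = w * v * w⁻¹ * w := by group
      _ = v * w := by rw [← h3]
  have hdv : p ∣ (centralizer {v}).index := by
    rw [← h2] at hd
    exact hd.trans (index_quot_dvd N v)
  have e3 := hG.h2 1 v PE.one hv (Commute.one_left _) hdv
  rw [one_mul, ← hHC, HC_index, h2] at e3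
  have e4 := hG.h2 u v hu hv huv hdv
  rw [e] at e4
  apply le_antisymm
  · rw [← hg, ← e4]
    exact fact_le_of_dvd index_ne_zero_of_finite (index_quot_dvd N g)
  · rw [← e3]
    apply fact_le_of_dvd index_ne_zero_of_finite
    apply index_dvd_of_le
    rw [cent_mul hx hy hxy]
    exact inf_le_right

end inherit

section factors

universe u

/-- A nonabelian simple group of order divisible by `p`. -/
def Bad (p : ℕ) (S : Type u) [Group S] : Prop :=
  IsSimpleGroup S ∧ (¬ ∀ a b : S, a * b = b * a) ∧ p ∣ Nat.card S

/-- There are two bad sections in a subnormal chain. -/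
def Two (p : ℕ) (G : Type u) [Group G] : Prop :=
  ∃ K1 K2 : Subgroup G, K1 ≤ K2 ∧ K1.IsSubnormal ∧
    (∃ (S : Type u) (_ : Group S) (f : K1 →* S), Function.Surjective f ∧ Bad p S) ∧
    (∃ (S : Type u) (_ : Group S) (f : K2 →* S), Function.Surjective f ∧ Bad p S ∧
      ∀ k : K2, (k : G) ∈ K1 → f k = 1)

/-- No bad section. -/
def Zero (p : ℕ) (G : Type u) [Group G] : Prop :=
  ∀ (K : Subgroup G) (S : Type u) [Group S] (f : K →* S), Function.Surjective f → ¬ Bad p S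

variable {G : Type u} [Group G] {p : ℕ}

lemma dichotomy (N K : Subgroup G) [hN : N.Normal] {S : Type u} [Group S] (f : K →* S)
    (hf : Function.Surjective f) (hS : IsSimpleGroup S) :
    (∀ s, ∃ k : K, (k : G) ∈ N ∧ f k = s) ∨ (∀ k : K, (k : G) ∈ N → f k = 1) := by
  have hn : ((N.subgroupOf K).map f).Normal := Normal.map inferInstance f hf
  rcases hn.eq_bot_or_eq_top with h | h
  · right
    intro k hk
    have : f k ∈ (N.subgroupOf K).map f := mem_map_of_mem f (mem_subgroupOf.2 hk)
    rwa [h, mem_bot] at this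
  · left
    intro s
    have : s ∈ (N.subgroupOf K).map f := by rw [h]; exact mem_top _
    obtain ⟨k, hk, e⟩ := this
    exact ⟨k, hk, e⟩

lemma restr (N K : Subgroup G) {S : Type u} [Group S] (f : K →* S)
    (hf : ∀ s, ∃ k : K, (k : G) ∈ N ∧ f k = s) :
    ∃ f' : K.subgroupOf N →* S, Function.Surjective f' ∧
      ∀ k : K.subgroupOf N, f' k = f ⟨k.1.1, k.2⟩ := by
  refine ⟨⟨⟨fun k => f ⟨k.1.1, k.2⟩, ?_⟩, ?_⟩, ?_, fun k => rfl⟩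
  · exact map_one f
  · intro x y
    exact map_mul f ⟨x.1.1, x.2⟩ ⟨y.1.1, y.2⟩
  · intro s
    obtain ⟨k, hk, e⟩ := hf s
    exact ⟨⟨⟨k.1, hk⟩, k.2⟩, e⟩

lemma descend (N K : Subgroup G) [N.Normal] {S : Type u} [Group S] (f : K →* S)
    (hs : Function.Surjective f) (hf : ∀ k : K, (k : G) ∈ N → f k = 1) :
    ∃ f' : K.map (QuotientGroup.mk' N) →* S, Function.Surjective f' ∧
      ∀ k : K, f' ⟨QuotientGroup.mk' N k, mem_map_of_mem _ k.2⟩ = f k := by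
  let φ : K →* K.map (QuotientGroup.mk' N) := (QuotientGroup.mk' N).subgroupMap K
  have hφ : Function.Surjective φ := (QuotientGroup.mk' N).subgroupMap_surjective K
  have hker : φ.ker ≤ f.ker := by
    intro k hk
    apply hf
    have : QuotientGroup.mk' N (k : G) = 1 := congrArg Subtype.val hk
    exact (QuotientGroup.eq_one_iff _).1 this
  have h : ∀ k, (MonoidHom.liftOfSurjective φ hφ ⟨f, hker⟩) (φ k) = f k := fun k =>
    MonoidHom.liftOfRightInverse_comp_apply _ _ _ _ k
  refine ⟨MonoidHom.liftOfSurjective φ hφ ⟨f, hker⟩, fun s => ?_, h⟩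
  obtain ⟨k, e⟩ := hs s
  exact ⟨φ k, (h k).trans e⟩

lemma two_quot (N : Subgroup G) [N.Normal] (h0 : Zero p N) (h : Two p G) : Two p (G ⧸ N) := by
  obtain ⟨K1, K2, hle, hsn, ⟨S1, _, f1, hf1, hS1⟩, ⟨S2, _, f2, hf2, hS2, h12⟩⟩ := h
  rcases dichotomy N K1 f1 hf1 hS1.1 with h1 | h1
  · obtain ⟨f', hf', -⟩ := restr N K1 f1 h1
    exact absurd hS1 (h0 _ _ f' hf')
  rcases dichotomy N K2 f2 hf2 hS2.1 with h2 | h2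
  · obtain ⟨f', hf', -⟩ := restr N K2 f2 h2
    exact absurd hS2 (h0 _ _ f' hf')
  obtain ⟨f1', hf1', e1⟩ := descend N K1 f1 hf1 h1
  obtain ⟨f2', hf2', e2⟩ := descend N K2 f2 hf2 h2
  refine ⟨_, _, map_mono hle, hsn.map (QuotientGroup.mk'_surjective N), ⟨S1, _, f1', hf1', hS1⟩,
    ⟨S2, _, f2', hf2', hS2, ?_⟩⟩
  rintro ⟨k, hk⟩ ⟨g, hg, e⟩
  have e' : QuotientGroup.mk' N g = k := e
  subst e'
  exact (e2 ⟨g, hle hg⟩).trans (h12 _ hg)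

lemma two_sub (N : Subgroup G) [N.Normal] (h0 : Zero p (G ⧸ N)) (h : Two p G) : Two p N := by
  obtain ⟨K1, K2, hle, hsn, ⟨S1, _, f1, hf1, hS1⟩, ⟨S2, _, f2, hf2, hS2, h12⟩⟩ := h
  rcases dichotomy N K1 f1 hf1 hS1.1 with h1 | h1
  swap
  · obtain ⟨f', hf', -⟩ := descend N K1 f1 hf1 h1
    exact absurd hS1 (h0 _ _ f' hf')
  rcases dichotomy N K2 f2 hf2 hS2.1 with h2 | h2
  swap
  · obtain ⟨f', hf', -⟩ := descend N K2 f2 hf2 h2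
    exact absurd hS2 (h0 _ _ f' hf')
  obtain ⟨f1', hf1', e1⟩ := restr N K1 f1 h1
  obtain ⟨f2', hf2', e2⟩ := restr N K2 f2 h2
  refine ⟨_, _, subgroupOf_mono N hle, hsn.subgroupOf, ⟨S1, _, f1', hf1', hS1⟩,
    ⟨S2, _, f2', hf2', hS2, ?_⟩⟩
  intro k hk
  rw [e2]
  exact h12 _ hk

lemma zero_p' [Finite G] (h : ¬ p ∣ Nat.card G) : Zero p G := by
  intro K S _ f hf hS
  exact h (hS.2.2.trans ((card_dvd_of_surjective f hf).trans (card_subgroup_dvd_card K)))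

lemma zero_comm (h : ∀ a b : G, a * b = b * a) : Zero p G := by
  intro K S _ f hf hS
  apply hS.2.1
  intro a b
  obtain ⟨a, rfl⟩ := hf a
  obtain ⟨b, rfl⟩ := hf b
  rw [← map_mul, ← map_mul]
  exact congrArg f (Subtype.ext (h a b))

lemma zero_pgroup [Fact p.Prime] [Finite G] (h : IsPGroup p G) : Zero p G := by
  intro K S _ f hf hS
  have hS' : IsPGroup p S := (h.to_subgroup K).of_surjective f hf
  haveI := hS.1
  haveI : Finite S := Finite.of_surjective f hf
  haveI := hS'.center_nontrivial
  apply hS.2.1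
  have h1 : (center S).Normal := inferInstance
  rcases h1.eq_bot_or_eq_top with h2 | h2
  · exact absurd h2 ((nontrivial_iff_ne_bot _).1 inferInstance)
  · intro a b
    have : b ∈ center S := by rw [h2]; exact mem_top _
    exact mem_center_iff.1 this a

lemma not_two_simple (h : IsSimpleGroup G) : ¬ Two p G := by
  rintro ⟨K1, K2, hle, hsn, ⟨S1, _, f1, hf1, hS1⟩, ⟨S2, _, f2, hf2, hS2, h12⟩⟩
  rcases hsn.eq_bot_or_top_of_isSimpleGroup h with rfl | rfl
  · apply hS1.2.1
    intro a b
    obtain ⟨a, rfl⟩ := hf1 a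
    obtain ⟨b, rfl⟩ := hf1 b
    rw [Subsingleton.elim a b]
  · apply hS2.2.1
    intro a b
    obtain ⟨a, rfl⟩ := hf2 a
    obtain ⟨b, rfl⟩ := hf2 b
    rw [h12 a (mem_top _), h12 b (mem_top _)]

end factors

section induct

universe u

variable {p : ℕ}

lemma exists_char_p' (p : ℕ) [Fact p.Prime] (M : Type u) [Group M] [Finite M] :
    ∃ K : Subgroup M, K.Characteristic ∧ ¬ p ∣ Nat.card K ∧
      ∀ L : Subgroup M, L.Normal → ¬ p ∣ Nat.card L → L ≤ K := by
  obtain ⟨K, ⟨hKn, hKp⟩, hmax⟩ := (wellFounded_gt (α := Subgroup M)).has_min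
    {K | K.Normal ∧ ¬ p ∣ Nat.card K} ⟨⊥, inferInstance, by
      rw [card_bot]; exact (Fact.out : p.Prime).one_lt.ne' ∘ Nat.dvd_one.1⟩
  have hle : ∀ L : Subgroup M, L.Normal → ¬ p ∣ Nat.card L → L ≤ K := by
    intro L hL hLp
    have hmem : ¬ p ∣ Nat.card (L ⊔ K : Subgroup M) := by
      have h1 := relIndex_mul_relIndex ⊥ K (L ⊔ K) bot_le le_sup_right
      rw [relIndex_bot_left, relIndex_bot_left, relIndex_sup_right] at h1
      rw [← h1, (Fact.out : p.Prime).dvd_mul]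
      refine not_or.2 ⟨hKp, fun h => hLp (h.trans (relIndex_dvd_card K L))⟩
    have := hmax (L ⊔ K) ⟨inferInstance, hmem⟩
    have h2 : ¬ K < L ⊔ K := this
    by_contra h3
    exact h2 (lt_of_le_of_ne le_sup_right fun e => h3 (by rw [e]; exact le_sup_left))
  refine ⟨K, ?_, hKp, hle⟩
  rw [characteristic_iff_map_le]
  intro φ
  refine hle _ (hKn.map _ φ.surjective) ?_
  rwa [Nat.card_congr (K.equivMapOfInjective φ.toMonoidHom φ.injective).toEquiv.symm]

lemma minimal_simple [Fact p.Prime] {a : ℕ} {G : Type u} [Group G] [Finite G] (hG : HH p a G)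
    (hgen : ∀ N : Subgroup G, (∀ x, PE p x → x ∈ N) → N = ⊤)
    (hp' : ∀ N : Subgroup G, N.Normal → ¬ p ∣ Nat.card N → N = ⊥)
    (M : Subgroup G) [hM : M.Normal] (hne : M ≠ ⊥)
    (hmin : ∀ N : Subgroup G, N.Normal → N ≤ M → N ≠ ⊥ → N = M) : IsSimpleGroup M := by
  haveI hnt : Nontrivial M := (nontrivial_iff_ne_bot M).2 hne
  obtain ⟨N, ⟨hNn, hNb⟩, hNmin⟩ := (wellFounded_lt (α := Subgroup M)).has_min
    {N | N.Normal ∧ N ≠ ⊥} ⟨⊤, inferInstance, top_ne_bot⟩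
  have hpN : p ∣ Nat.card N := by
    by_contra h
    obtain ⟨K, hK, hKp, hKL⟩ := exists_char_p' p M
    have h1 : K.map M.subtype = ⊥ := by
      apply hp' _ inferInstance
      rwa [Nat.card_congr (K.equivMapOfInjective M.subtype M.subtype_injective).toEquiv.symm]
    have h2 : K = ⊥ := (map_eq_bot_iff_of_injective K M.subtype_injective).1 h1
    exact hNb (le_bot_iff.1 (h2 ▸ hKL N hNn h))
  have key : ∀ h : G, PE p h → ∀ y : M, y ∈ N → MulAut.conjNormal h y ∈ N := by
    intro h hh
    obtain ⟨T, hT, hTh⟩ := Syl.exists_le (p := p) (C := centralizer {h}) (H := ⊤) le_top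
      (by rw [relIndex_top_right]; exact hG.h1 h hh)
    have hR : Syl p (T ⊓ M) M := hT.inf le_top (fun x _ m hm => hM.conj_mem m hm x)
    obtain ⟨n, hn⟩ := exists_prime_orderOf_dvd_card' (G := N) p hpN
    have hn1 : n ≠ 1 := fun e => by
      rw [e, orderOf_one] at hn
      exact (Fact.out : p.Prime).one_lt.ne hn
    have hnp : PE p n := ⟨1, by rw [pow_one, ← hn, pow_orderOf_eq_one]⟩
    obtain ⟨m, hm, hmT⟩ := hR.conj_mem ((hnp.map N.subtype).map M.subtype) n.1.2
    set x : M := ⟨m, hm⟩ * n.1 * ⟨m, hm⟩⁻¹ with hx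
    have hxN : x ∈ N := hNn.conj_mem _ n.2 _
    have hxT : (x : G) ∈ T := (mem_inf.1 hmT).1
    have hxh : MulAut.conjNormal h x = x := by
      apply Subtype.ext
      rw [MulAut.conjNormal_apply]
      have := mem_centralizer_singleton_iff.1 (hTh hxT)
      rw [← this]; group
    have hx1 : x ≠ 1 := fun e => hn1 (by
      rw [hx, conj_eq_one_iff] at e
      exact Subtype.ext e)
    set L : Subgroup M := N ⊓ N.comap (MulAut.conjNormal h : M ≃* M).toMonoidHom with hL
    have hLn : L.Normal := by
      rw [hL]
      haveI := hNn.comap (MulAut.conjNormal h : M ≃* M).toMonoidHom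
      infer_instance
    have hxL : x ∈ L := mem_inf.2 ⟨hxN, by
      rw [mem_comap]
      change MulAut.conjNormal h x ∈ N
      rwa [hxh]⟩
    have hLb : L ≠ ⊥ := fun e => hx1 (by rwa [e, mem_bot] at hxL)
    have hLN : L = N := by
      by_contra hne
      exact hNmin L ⟨hLn, hLb⟩ (lt_of_le_of_ne inf_le_left hne)
    intro y hy
    rw [← hLN] at hy
    exact (mem_inf.1 hy).2
  have key2 : ∀ h : G, PE p h → ∀ y ∈ N.map M.subtype, h * y * h⁻¹ ∈ N.map M.subtype := by
    rintro h hh _ ⟨y, hy, rfl⟩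
    exact ⟨_, key h hh y hy, MulAut.conjNormal_apply h y⟩
  have hnorm : (N.map M.subtype).Normal := by
    rw [← normalizer_eq_top_iff]
    apply hgen
    intro h hh
    rw [mem_normalizer_iff]
    intro y
    refine ⟨key2 h hh y, fun hy => ?_⟩
    have := key2 h⁻¹ hh.inv _ hy
    have e : h⁻¹ * (h * y * h⁻¹) * h⁻¹⁻¹ = y := by group
    rwa [e] at this
  have hNM := hmin _ hnorm (map_subtype_le N)
    (fun e => hNb ((map_eq_bot_iff_of_injective N M.subtype_injective).1 e))
  have hNt : N = ⊤ := by
    rw [eq_top_iff]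
    rintro y -
    have : (y : G) ∈ N.map M.subtype := by rw [hNM]; exact y.2
    obtain ⟨z, hz, e⟩ := this
    rwa [← (Subtype.ext e : z = y)]
  refine ⟨fun L hL => ?_⟩
  by_cases hLb : L = ⊥
  · exact Or.inl hLb
  · right
    by_contra hLt
    exact hNmin L ⟨hL, hLb⟩ (by rw [hNt]; exact lt_top_iff_ne_top.2 hLt)

lemma not_two_of_zero {G : Type u} [Group G] (h : Zero p G) : ¬ Two p G := by
  rintro ⟨K1, K2, hle, hsn, ⟨S1, _, f1, hf1, hS1⟩, -⟩
  exact h K1 S1 f1 hf1 hS1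

lemma card_quot_lt {G : Type u} [Group G] [Finite G] {N : Subgroup G} (hN : N ≠ ⊥) :
    Nat.card (G ⧸ N) < Nat.card G := by
  rw [card_eq_card_quotient_mul_card_subgroup N]
  exact lt_mul_of_one_lt_right Nat.card_pos ((one_lt_card_iff_ne_bot N).2 hN)

theorem not_two (p a : ℕ) [Fact p.Prime] (n : ℕ) : ∀ (G : Type u) [Group G] [Finite G],
    Nat.card G = n → HH p a G → ¬ Two p G := by
  induction n using Nat.strong_induction_on with
  | _ n ih =>
  intro G _ _ hn hG htwo
  obtain ⟨P, hP⟩ := Syl.exists p (⊤ : Subgroup G)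
  -- generated by `p`-elements
  have hOi : ¬ p ∣ (normalClosure {x : G | PE p x}).index := by
    have hle : P ≤ normalClosure {x : G | PE p x} := fun x hx =>
      subset_normalClosure (hP.PE hx)
    have := hP.2.2
    rw [relIndex_top_right] at this
    exact fun h => this (h.trans (index_dvd_of_le hle))
  have hOt : normalClosure {x : G | PE p x} = ⊤ := by
    by_contra hne
    refine ih _ ?_ (normalClosure {x : G | PE p x}) rfl (hG.sub _ hOi)
      (two_sub _ (zero_p' hOi) htwo)
    rw [← hn]
    refine lt_of_le_of_ne (card_le_card_group _) fun e => hne ?_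
    exact eq_top_of_card_eq _ e
  have hgen : ∀ N : Subgroup G, (∀ x, PE p x → x ∈ N) → N = ⊤ := by
    intro N hN
    rw [eq_top_iff, ← hOt, normalClosure, closure_le]
    intro x hx
    obtain ⟨y, hy, hc⟩ := Group.mem_conjugatesOfSet_iff.1 hx
    obtain ⟨g, rfl⟩ := isConj_iff.1 hc
    exact hN _ (PE.conj hy g)
  have hp' : ∀ N : Subgroup G, N.Normal → ¬ p ∣ Nat.card N → N = ⊥ := by
    intro N hN hNp
    by_contra hne
    exact ih _ (hn ▸ card_quot_lt hne) (G ⧸ N) rfl (hG.quot_p' N hNp)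
      (two_quot N (zero_p' hNp) htwo)
  have hpp : ∀ N : Subgroup G, N.Normal → IsPGroup p N → N = ⊥ := by
    intro N hN hNp
    by_contra hne
    have hcen : centralizer (N : Set G) = ⊤ := by
      apply hgen
      intro x hx
      obtain ⟨T, hT, hTx⟩ := Syl.exists_le (p := p) (C := centralizer {x}) (H := ⊤) le_top
        (by rw [relIndex_top_right]; exact hG.h1 x hx)
      obtain ⟨m, -, hm⟩ := hT.conj_le hNp le_top
      rw [mem_centralizer_iff]
      intro y hy
      have h1 : m⁻¹ * y * m ∈ N := by
        have := hN.conj_mem y hy m⁻¹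
        rwa [inv_inv] at this
      have h2 := hm _ h1
      have e : m * (m⁻¹ * y * m) * m⁻¹ = y := by group
      rw [e] at h2
      exact mem_centralizer_singleton_iff.1 (hTx h2)
    have hc : ∀ y ∈ N, ∀ g : G, y * g = g * y := by
      intro y hy g
      have : g ∈ centralizer (N : Set G) := by rw [hcen]; exact mem_top _
      exact mem_centralizer_iff.1 this y hy
    exact ih _ (hn ▸ card_quot_lt hne) (G ⧸ N) rfl (hG.quot_central N hNp hc)
      (two_quot N (zero_comm fun x y => Subtype.ext (hc x x.2 y)) htwo)
  have hnt : (⊤ : Subgroup G) ≠ ⊥ := by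
    intro e
    haveI : Subsingleton G := subsingleton_iff.1 (subsingleton_of_bot_eq_top e.symm)
    exact not_two_of_zero (zero_comm fun a b => Subsingleton.elim _ _) htwo
  obtain ⟨M, ⟨hM, hMb⟩, hmin⟩ := (wellFounded_lt (α := Subgroup G)).has_min
    {N | N.Normal ∧ N ≠ ⊥} ⟨⊤, inferInstance, hnt⟩
  have hgenM : ∀ N : Subgroup (G ⧸ M), (∀ x, PE p x → x ∈ N) → N = ⊤ := by
    intro N hN
    have h1 : N.comap (QuotientGroup.mk' M) = ⊤ := hgen _ fun x hx => hN _ (hx.map _)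
    rw [eq_top_iff]
    rintro x -
    obtain ⟨g, rfl⟩ := QuotientGroup.mk'_surjective M x
    have : g ∈ N.comap (QuotientGroup.mk' M) := by rw [h1]; exact mem_top _
    exact this
  have hpg : IsPGroup p (G ⧸ M) := pgroup_of_all hgenM (main_lemma hG hgen M hMb hp' hpp)
  have hs := minimal_simple hG hgen hp' M hMb (fun N hN hNM hNb => by
    by_contra hne
    exact hmin N ⟨hN, hNb⟩ (lt_of_le_of_ne hNM hne))
  exact not_two_simple hs (two_sub M (zero_pgroup hpg) htwo)

end induct

theorem hh_of {G : Type*} [Group G] [Finite G] {p a : ℕ} (hp : p.Prime) (ha : ∀ x : G, pIndex p x ≠ 1 → pIndex p x = p ^ a)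
    (hss : ∀ x : G, IsPElement p x → pIndex p x = 1) : HH p a G := by
  haveI : Fact p.Prime := ⟨hp⟩
  refine ⟨fun x hx => ?_, fun x y hx hy hxy hd => ?_⟩
  · have h := hss x (isPElement_of_PE hp hx)
    rw [dvd_iff_fact index_ne_zero_of_finite, not_not]
    have h' : p ^ (centralizer {x}).index.factorization p = p ^ 0 := by rw [pow_zero]; exact h
    exact Nat.pow_right_injective hp.two_le h'
  · have h1 : p ∣ (centralizer {x * y}).index := by
      refine hd.trans (index_dvd_of_le ?_)
      rw [cent_mul hx hy hxy]
      exact inf_le_right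
    rw [dvd_iff_fact index_ne_zero_of_finite] at h1
    have h2 : pIndex p (x * y) ≠ 1 := fun h => h1 (by
      have h' : p ^ (centralizer {x * y}).index.factorization p = p ^ 0 := by
        rw [pow_zero]; exact h
      exact Nat.pow_right_injective hp.two_le h')
    exact Nat.pow_right_injective hp.two_le (ha _ h2)

lemma series_subnormal {G : Type*} [Group G] (n : ℕ) (s : Fin (n + 1) → Subgroup G)
    (hmono : Monotone s) (hlast : s (Fin.last n) = ⊤)
    (hnorm : ∀ i : Fin n, ((s i.castSucc).subgroupOf (s i.succ)).Normal) (i : Fin (n + 1)) :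
    (s i).IsSubnormal := by
  induction i using Fin.reverseInduction with
  | last => rw [hlast]; exact IsSubnormal.top
  | cast i ih => exact IsSubnormal.step _ _ (hmono (Fin.castSucc_le_succ i)) ih (hnorm i)

lemma two_of_lt {G : Type*} [Group G] {p : ℕ} (n : ℕ) (s : Fin (n + 1) → Subgroup G)
    (hmono : Monotone s) (hlast : s (Fin.last n) = ⊤)
    (hnorm : ∀ i : Fin n, ((s i.castSucc).subgroupOf (s i.succ)).Normal)
    (i j : Fin n) (hij : i < j)
    (hi : Bad p ((s i.succ) ⧸ (s i.castSucc).subgroupOf (s i.succ)))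
    (hj : Bad p ((s j.succ) ⧸ (s j.castSucc).subgroupOf (s j.succ))) : Two p G := by
  refine ⟨s i.succ, s j.succ, hmono (Fin.succ_le_succ_iff.2 hij.le),
    series_subnormal n s hmono hlast hnorm _,
    ⟨_, _, QuotientGroup.mk' _, QuotientGroup.mk'_surjective _, hi⟩,
    ⟨_, _, QuotientGroup.mk' _, QuotientGroup.mk'_surjective _, hj, fun k hk => ?_⟩⟩
  refine (QuotientGroup.eq_one_iff k).2 (mem_subgroupOf.2 (hmono ?_ hk))
  exact Fin.succ_le_castSucc_iff.2 hij

end RP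

/-- If `G ∈ R(p)**`, then in any composition series of `G` at most one composition factor
is a nonabelian simple group whose order is divisible by `p`. -/
theorem rp_star_star_at_most_one_nonabelian_factor {G : Type*} [Group G] [Finite G] (p : ℕ)
    (hp : p.Prime) (hR : IsPIndexExtremal p G)
    (hss : ∀ x : G, IsPElement p x → pIndex p x = 1)
    (n : ℕ) (s : Fin (n + 1) → Subgroup G)
    (hmono : Monotone s) (h0 : s 0 = ⊥) (hlast : s (Fin.last n) = ⊤)
    (hnorm : ∀ i : Fin n, ((s i.castSucc).subgroupOf (s i.succ)).Normal)
    (hsimple : ∀ i : Fin n, letI := hnorm i;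
      IsSimpleGroup ((s i.succ) ⧸ (s i.castSucc).subgroupOf (s i.succ))) :
    ∀ i j : Fin n,
      (letI := hnorm i;
        (¬ ∀ a b : (s i.succ) ⧸ (s i.castSucc).subgroupOf (s i.succ), a * b = b * a) ∧
          p ∣ Nat.card ((s i.succ) ⧸ (s i.castSucc).subgroupOf (s i.succ))) →
      (letI := hnorm j;
        (¬ ∀ a b : (s j.succ) ⧸ (s j.castSucc).subgroupOf (s j.succ), a * b = b * a) ∧
          p ∣ Nat.card ((s j.succ) ⧸ (s j.castSucc).subgroupOf (s j.succ))) →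
      i = j := by
  haveI : Fact p.Prime := ⟨hp⟩
  obtain ⟨b, ⟨hb1, x0, hx0⟩, hb⟩ := hR
  have hG : RP.HH p ((classSize x0).factorization p) G := RP.hh_of hp
    (fun x hx => (hb _ ⟨hx, x, rfl⟩).trans hx0.symm) hss
  have hnt := RP.not_two p _ _ G rfl hG
  intro i j hi hj
  letI := hnorm
  rcases lt_trichotomy i j with h | h | h
  · exact absurd (RP.two_of_lt n s hmono hlast hnorm i j h
      ⟨hsimple i, hi.1, hi.2⟩ ⟨hsimple j, hj.1, hj.2⟩) hnt
  · exact h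
  · exact absurd (RP.two_of_lt n s hmono hlast hnorm j i h
      ⟨hsimple j, hj.1, hj.2⟩ ⟨hsimple i, hi.1, hi.2⟩) hnt
end

section
/- (Burnside) Let G be a finite group of composite order. If G has a conjugacy class whose size is p^a for some prime p and integer a ≥ 1, then G is not simple. -/
/-- average of roots of unity -/
lemma avg_roots_aux (k : ℕ) (hk : 0 < k) [NeZero k] (K : Type) [Field K] [NumberField K]
    [Algebra ℚ K] [IsCyclotomicExtension {k} ℚ K] (s : Multiset ℂ) (hs : ∀ z ∈ s, z ^ k = 1)
    (hint : IsIntegral ℤ (s.sum / (Multiset.card s : ℂ))) (hne : s.sum ≠ 0) :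
    ∀ z ∈ s, z = s.sum / (Multiset.card s : ℂ) := by
  let ι : K →+* ℂ := Classical.choice inferInstance
  have hζ := IsCyclotomicExtension.zeta_spec k ℚ K
  have hζ' := hζ.map_of_injective ι.injective
  have hlift : ∃ t : Multiset K, t.map ι = s := by
    have : CanLift ℂ K ι (fun z => z ^ k = 1) := ⟨fun z hz => by
      obtain ⟨i, -, hi⟩ := hζ'.eq_pow_of_pow_eq_one hz
      exact ⟨_, (map_pow ι _ i).trans hi⟩⟩
    lift s to Multiset K using hs
    exact ⟨s, rfl⟩
  obtain ⟨t, rfl⟩ := hlift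
  have hcard : (Multiset.card t : ℂ) ≠ 0 := by
    intro h
    have : t = 0 := by simpa using h
    simp [this] at hne
  have hcard' : (0:ℝ) < (Multiset.card t : ℝ) := by
    have : Multiset.card t ≠ 0 := by exact_mod_cast hcard
    positivity
  have ht : ∀ z ∈ t, z ^ k = 1 := fun z hz => by
    apply ι.injective
    simpa using hs (ι z) (Multiset.mem_map_of_mem _ hz)
  have hα : ι (t.sum / (Multiset.card t : K)) =
      (t.map ι).sum / (Multiset.card (t.map ι) : ℂ) := by
    simp [map_multiset_sum]
  have hnorm1 : ∀ w : ℂ, w ^ k = 1 → ‖w‖ = 1 := fun w hw =>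
    Complex.norm_eq_one_of_pow_eq_one hw hk.ne'
  have hpow := NumberField.Embeddings.pow_eq_one_of_norm_le_one K ℂ
    (x := t.sum / (Multiset.card t : K)) (by
      intro h
      rw [h, map_zero] at hα
      rw [eq_comm, div_eq_zero_iff] at hα
      rcases hα with hα | hα
      · exact hne hα
      · exact hcard (by simpa using hα))
    (by
      rw [← hα] at hint
      exact (isIntegral_algHom_iff (ι.toIntAlgHom) ι.injective).1 hint)
    (by
      intro φ
      have : φ (t.sum / (Multiset.card t : K)) = (t.map φ).sum / (Multiset.card t : ℂ) := by
        simp [map_multiset_sum]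
      rw [this, norm_div, Complex.norm_natCast, div_le_one hcard']
      refine (norm_multiset_sum_le _).trans ?_
      rw [Multiset.map_map]
      have h2 : t.map (fun z => ‖φ z‖) = t.map (fun _ => (1:ℝ)) :=
        Multiset.map_congr rfl fun z hz => hnorm1 _ (by rw [← map_pow, ht z hz, map_one])
      simp only [Function.comp_def]
      rw [h2]
      simp)
  obtain ⟨n, hn, hpow⟩ := hpow
  have hα1 : ‖ι (t.sum / (Multiset.card t : K))‖ = 1 :=
    Complex.norm_eq_one_of_pow_eq_one (by rw [← map_pow, hpow, map_one]) hn.ne'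
  rw [hα] at hα1
  generalize t.map ι = s at *
  set α := s.sum / (Multiset.card s : ℂ) with hαd
  have hα0 : α ≠ 0 := by intro h; simp [h] at hα1
  have hs0 : (Multiset.card s : ℂ) ≠ 0 := by
    intro h; apply hα0; rw [hαd, h, div_zero]
  have hle : ∀ z ∈ s, ‖z / α‖ = 1 := fun z hz => by
    rw [norm_div, hα1, hnorm1 z (hs z hz), div_one]
  have hsum : (s.map (fun z => (z / α).re)).sum = (Multiset.card s : ℝ) := by
    have h1 : (s.map (fun z => z / α)).sum = (Multiset.card s : ℂ) := by
      rw [Multiset.sum_map_div, Multiset.map_id', div_eq_iff hα0, hαd]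
      field_simp
    have h2 := congrArg Complex.reAddGroupHom h1
    rw [map_multiset_sum, Multiset.map_map] at h2
    simpa [Function.comp_def] using h2
  intro z hz
  have hre : (z / α).re = 1 := by
    by_contra hlt
    have hle' : ∀ w ∈ s, (w / α).re ≤ 1 := fun w hw => by
      rw [← hle w hw]; exact Complex.re_le_norm _
    have := Multiset.sum_lt_sum (s := s) (f := fun z => (z / α).re) (g := fun _ => 1)
      hle' ⟨z, hz, lt_of_le_of_ne (hle' z hz) hlt⟩
    rw [hsum] at this
    simp at this
  have him : z / α = 1 := by
    have h3 := hle z hz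
    have := Complex.sq_norm (z / α)
    rw [h3, Complex.normSq_apply, hre] at this
    have him : (z / α).im = 0 := by nlinarith
    exact Complex.ext (by simpa using hre) (by simpa using him)
  rw [div_eq_one_iff_eq hα0] at him
  exact him

lemma avg_roots (k : ℕ) (hk : 0 < k) (s : Multiset ℂ) (hs : ∀ z ∈ s, z ^ k = 1)
    (hint : IsIntegral ℤ (s.sum / (Multiset.card s : ℂ))) (hne : s.sum ≠ 0) :
    ∀ z ∈ s, z = s.sum / (Multiset.card s : ℂ) := by
  have : NeZero k := ⟨hk.ne'⟩
  have hcyc : @IsCyclotomicExtension {k} ℚ (CyclotomicField k ℚ) _ _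
      (CyclotomicField.algebra k ℚ) := inferInstance
  exact @avg_roots_aux k hk _ (CyclotomicField k ℚ) _ _ (CyclotomicField.algebra k ℚ) hcyc
    s hs hint hne

open Polynomial in
lemma matrix_roots {n : ℕ} [NeZero n] (M : Matrix (Fin n) (Fin n) ℂ) (k : ℕ)
    (hM : M ^ k = 1) : ∀ z ∈ M.charpoly.roots, z ^ k = 1 := by
  intro z hz
  have h := Polynomial.isRoot_of_mem_roots hz
  rw [← Matrix.mem_spectrum_iff_isRoot_charpoly] at h
  have := spectrum.pow_mem_pow M k h
  rw [hM, spectrum.one_eq] at this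
  exact this

lemma trace_integral {n : ℕ} [NeZero n] (M : Matrix (Fin n) (Fin n) ℂ) (k : ℕ) (hk : 0 < k)
    (hM : M ^ k = 1) : IsIntegral ℤ M.trace := by
  rw [Matrix.trace_eq_sum_roots_charpoly]
  refine IsIntegral.multiset_sum fun z hz => ?_
  refine IsIntegral.of_pow hk ?_
  rw [matrix_roots M k hM z hz]
  exact isIntegral_one

open Polynomial in
lemma matrix_scalar {n : ℕ} [NeZero n] (M : Matrix (Fin n) (Fin n) ℂ) (k : ℕ) (hk : 0 < k)
    (hM : M ^ k = 1) (hint : IsIntegral ℤ (M.trace / n)) (hne : M.trace ≠ 0) :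
    ∃ c : ℂ, M = algebraMap ℂ _ c := by
  have hcard : Multiset.card M.charpoly.roots = n := by
    rw [(Polynomial.splits_iff_card_roots.1 (IsAlgClosed.splits M.charpoly)),
      Matrix.charpoly_natDegree_eq_dim, Fintype.card_fin]
  have hall := avg_roots k hk M.charpoly.roots (matrix_roots M k hM)
    (by rwa [hcard, ← Matrix.trace_eq_sum_roots_charpoly])
    (by rwa [← Matrix.trace_eq_sum_roots_charpoly])
  set c := M.charpoly.roots.sum / (Multiset.card M.charpoly.roots : ℂ)
  refine ⟨c, ?_⟩
  have hrep : M.charpoly.roots = Multiset.replicate n c :=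
    Multiset.eq_replicate.2 ⟨hcard, hall⟩
  have hcp : M.charpoly = (X - C c) ^ n := by
    rw [(IsAlgClosed.splits M.charpoly).eq_prod_roots_of_monic M.charpoly_monic, hrep]
    simp
  have hck : c ^ k = 1 := matrix_roots M k hM c (by
    rw [hrep]; exact Multiset.mem_replicate.2 ⟨NeZero.ne n, rfl⟩)
  -- minpoly divides both
  have h1 : minpoly ℂ M ∣ (X - C c) ^ n := hcp ▸ minpoly.dvd ℂ M M.aeval_self_charpoly
  have h2 : minpoly ℂ M ∣ X ^ k - C 1 := minpoly.dvd ℂ M (by simp [hM])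
  have hsq : Squarefree (minpoly ℂ M) :=
    ((separable_X_pow_sub_C (1:ℂ) (by exact_mod_cast hk.ne') one_ne_zero).squarefree).squarefree_of_dvd h2
  have h3 : minpoly ℂ M ∣ X - C c := by
    exact (hsq.dvd_pow_iff_dvd (NeZero.ne n)).1 h1
  have h4 : aeval M (X - C c) = 0 := by
    obtain ⟨q, hq⟩ := h3
    rw [hq, map_mul, minpoly.aeval, zero_mul]
  simpa [sub_eq_zero] using h4

lemma trace_pi_matrix {m : ℕ} (d : Fin m → ℕ)
    (a : Π i, Matrix (Fin (d i)) (Fin (d i)) ℂ) :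
    LinearMap.trace ℂ _ (LinearMap.mulLeft ℂ a) = ∑ i, (d i : ℂ) * (a i).trace := by
  classical
  rw [LinearMap.trace_eq_matrix_trace ℂ (Pi.basis fun i => Matrix.stdBasis ℂ (Fin (d i)) (Fin (d i)))]
  rw [Matrix.trace, Fintype.sum_sigma]
  refine Finset.sum_congr rfl fun i _ => ?_
  rw [Fintype.sum_prod_type]
  have : ∀ j k, (LinearMap.toMatrix (Pi.basis fun i => Matrix.stdBasis ℂ (Fin (d i)) (Fin (d i)))
     (Pi.basis fun i => Matrix.stdBasis ℂ (Fin (d i)) (Fin (d i))) (LinearMap.mulLeft ℂ a)).diag ⟨i, (j, k)⟩ = a i j j := by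
    intro j k
    rw [Matrix.diag_apply, LinearMap.toMatrix_apply, Pi.basis_repr, Pi.basis_apply,
      Matrix.stdBasis_eq_single, LinearMap.mulLeft_apply, Pi.mul_apply, Pi.single_eq_same]
    simp [Matrix.stdBasis, Matrix.mul_apply, Matrix.single_apply]
  simp only [this, Matrix.trace, Finset.sum_const, Finset.card_univ, Fintype.card_fin, nsmul_eq_mul, Matrix.diag_apply, Finset.mul_sum]

lemma trace_group {G : Type*} [Group G] [Finite G] (x : G) (hx : x ≠ 1) :
    LinearMap.trace ℂ _ (LinearMap.mulLeft ℂ (MonoidAlgebra.single x (1:ℂ))) = 0 := by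
  classical
  cases nonempty_fintype G
  rw [LinearMap.trace_eq_matrix_trace ℂ (MonoidAlgebra.basis G ℂ), Matrix.trace]
  refine Finset.sum_eq_zero fun g _ => ?_
  rw [Matrix.diag_apply, LinearMap.toMatrix_apply]
  simp [MonoidAlgebra.basis, hx, MonoidAlgebra.single_mul_single]

lemma card_class {G : Type*} [Group G] [Fintype G] [DecidableEq G] (x : G) :
    (Finset.univ.filter fun y => IsConj x y).card = (Subgroup.centralizer {x}).index := by
  have h : (Subgroup.centralizer {x}).index = (MulAction.stabilizer (ConjAct G) x).index := by
    rw [Subgroup.centralizer_eq_comap_stabilizer]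
    exact Subgroup.index_comap_of_surjective (f := ConjAct.toConjAct.toMonoidHom) _
      (MulEquiv.surjective _)
  rw [h, MulAction.index_stabilizer, ← Set.ncard_coe_finset]
  congr 1
  ext y
  rw [ConjAct.mem_orbit_conjAct, isConj_comm]
  simp

lemma inv_p_not_integral (p : ℕ) (hp : p.Prime) (α : ℂ) (hα : IsIntegral ℤ α)
    (h : (1:ℂ) = p * α) : False := by
  have hp0 : (p:ℂ) ≠ 0 := by exact_mod_cast hp.ne_zero
  have : α = algebraMap ℚ ℂ (1 / p) := by
    rw [map_div₀, map_one, map_natCast, eq_div_iff hp0, mul_comm]; exact h.symm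
  rw [this] at hα
  have h2 : IsIntegral ℤ (1 / (p:ℚ)) :=
    (isIntegral_algHom_iff ((algebraMap ℚ ℂ).toIntAlgHom) (algebraMap ℚ ℂ).injective).1 hα
  obtain ⟨y, hy⟩ := IsIntegrallyClosed.isIntegral_iff.1 h2
  have hpq : (p:ℚ) ≠ 0 := by exact_mod_cast hp.ne_zero
  rw [eq_div_iff hpq] at hy
  have : y * (p:ℤ) = 1 := by
    rw [eq_intCast] at hy
    exact_mod_cast hy
  have := Int.isUnit_iff_natAbs_eq.1 (IsUnit.of_mul_eq_one_right y this)
  exact hp.one_lt.ne' (by simpa using this)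

section main

variable {G : Type*} [Group G] [Finite G]

lemma key_dichotomy [IsSimpleGroup G] (x : G) (p a : ℕ) (hp : p.Prime)
    (hcl : (Subgroup.centralizer {x}).index = p ^ a)
    (hxc : ¬ ∀ g : G, g * x = x * g) {n : ℕ} [NeZero n]
    (φ : MonoidAlgebra ℂ G →ₐ[ℂ] Matrix (Fin n) (Fin n) ℂ) (hφ : Function.Surjective φ) :
    (∀ g : G, φ (MonoidAlgebra.single g 1) = 1) ∨
    ∃ β : ℂ, IsIntegral ℤ β ∧
      (n : ℂ) * (φ (MonoidAlgebra.single x 1)).trace = p * β := by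
  classical
  cases nonempty_fintype G
  set M := φ (MonoidAlgebra.single x 1) with hMdef
  have hk : 0 < orderOf x := orderOf_pos x
  have hM : M ^ orderOf x = 1 := by
    rw [hMdef, ← map_pow, MonoidAlgebra.single_pow, pow_orderOf_eq_one, one_pow,
      ← MonoidAlgebra.one_def, map_one]
  have htr : IsIntegral ℤ M.trace := trace_integral M _ hk hM
  have hn0 : (n : ℂ) ≠ 0 := by exact_mod_cast NeZero.ne n
  by_cases hpn : p ∣ n
  · right
    obtain ⟨m, hm⟩ := hpn
    refine ⟨m * M.trace, (map_natCast (algebraMap ℤ ℂ) m ▸ isIntegral_algebraMap).mul htr, ?_⟩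
    have hm' : (n : ℂ) = p * m := by exact_mod_cast hm
    rw [hm', mul_assoc]
  by_cases h0 : M.trace = 0
  · right
    exact ⟨0, isIntegral_zero, by simp [h0]⟩
  left
  -- the class sum
  let C : Finset G := Finset.univ.filter fun y => IsConj x y
  let z0 : MonoidAlgebra ℤ G := ∑ y ∈ C, MonoidAlgebra.single y 1
  let z : MonoidAlgebra ℂ G := ∑ y ∈ C, MonoidAlgebra.single y 1
  have hz : IsIntegral ℤ z := by
    have h1 : IsIntegral ℤ z0 := IsIntegral.of_finite ℤ z0
    have h2 : MonoidAlgebra.mapRingHom G (Int.castRingHom ℂ) z0 = z := by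
      simp [z0, z, map_sum]
    rw [← h2]
    exact h1.map (MonoidAlgebra.mapRingHom G (Int.castRingHom ℂ)).toIntAlgHom
  have hzg : ∀ g : G, MonoidAlgebra.single g (1:ℂ) * z = z * MonoidAlgebra.single g 1 := by
    intro g
    simp only [z, Finset.mul_sum, Finset.sum_mul, MonoidAlgebra.single_mul_single, mul_one]
    refine Finset.sum_bij' (fun y _ => g * y * g⁻¹) (fun y _ => g⁻¹ * y * g) ?_ ?_ ?_ ?_ ?_
    · intro y hy
      simp only [C, Finset.mem_filter, Finset.mem_univ, true_and] at hy ⊢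
      exact hy.trans (isConj_iff.2 ⟨g, rfl⟩)
    · intro y hy
      simp only [C, Finset.mem_filter, Finset.mem_univ, true_and] at hy ⊢
      exact hy.trans (isConj_iff.2 ⟨g⁻¹, by simp⟩)
    · intro y _; group
    · intro y _; group
    · intro y _; simp
  have hzc : ∀ b : MonoidAlgebra ℂ G, b * z = z * b := by
    intro b
    induction b using MonoidAlgebra.induction_linear with
    | zero => simp
    | add f g hf hg => rw [add_mul, mul_add, hf, hg]
    | single g c =>
      have : MonoidAlgebra.single g c = c • MonoidAlgebra.single g (1:ℂ) := by simp
      rw [this, smul_mul_assoc, hzg, mul_smul_comm]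
  have hcen : φ z ∈ Set.center (Matrix (Fin n) (Fin n) ℂ) := by
    rw [Semigroup.mem_center_iff]
    intro b
    obtain ⟨b, rfl⟩ := hφ b
    rw [← map_mul, ← map_mul, hzc]
  rw [Matrix.center_eq_range] at hcen
  obtain ⟨ω, hω⟩ := hcen
  have hωint : IsIntegral ℤ ω := by
    have h1 : IsIntegral ℤ (φ z) := hz.map (φ.toRingHom.toIntAlgHom)
    rw [← hω] at h1
    exact (isIntegral_algHom_iff ((Matrix.scalar (Fin n) : ℂ →+* _).toIntAlgHom)
      (fun _ _ h => Matrix.scalar_inj.1 h)).1 h1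
  have hωtr : (n : ℂ) * ω = (p:ℂ) ^ a * M.trace := by
    have h1 : (φ z).trace = n * ω := by rw [← hω]; simp [Matrix.trace]
    rw [← h1]
    simp only [z, map_sum, Matrix.trace_sum]
    have h2 : ∀ y ∈ C, (φ (MonoidAlgebra.single y 1)).trace = M.trace := by
      intro y hy
      simp only [C, Finset.mem_filter, Finset.mem_univ, true_and] at hy
      obtain ⟨g, rfl⟩ := isConj_iff.1 hy
      have : MonoidAlgebra.single (g * x * g⁻¹) (1:ℂ) =
        MonoidAlgebra.single g 1 * MonoidAlgebra.single x 1 * MonoidAlgebra.single g⁻¹ 1 := by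
        simp [MonoidAlgebra.single_mul_single]
      rw [this, map_mul, Matrix.trace_mul_comm, ← map_mul, ← mul_assoc]
      simp [MonoidAlgebra.single_mul_single, M]
    rw [Finset.sum_congr rfl h2, Finset.sum_const, card_class, hcl]
    simp
  have hint : IsIntegral ℤ (M.trace / n) := by
    have hcop : IsCoprime ((p ^ a : ℕ) : ℤ) (n : ℤ) :=
      Nat.isCoprime_iff_coprime.2 (((Nat.Prime.coprime_iff_not_dvd hp).2 hpn).pow_left a)
    obtain ⟨u, v, huv⟩ := hcop
    have huv' : (u:ℂ) * (p:ℂ) ^ a + v * n = 1 := by exact_mod_cast huv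
    have : M.trace / n = algebraMap ℤ ℂ u * ω + algebraMap ℤ ℂ v * M.trace := by
      rw [div_eq_iff hn0, eq_intCast, eq_intCast]
      linear_combination (-M.trace) * huv' - u * hωtr
    rw [this]
    exact (isIntegral_algebraMap.mul hωint).add (isIntegral_algebraMap.mul htr)
  obtain ⟨c, hc⟩ := matrix_scalar M _ hk hM hint h0
  let ψ : G →* Matrix (Fin n) (Fin n) ℂ := (φ : _ →* _).comp (MonoidAlgebra.of ℂ G)
  have hψ : ∀ g, ψ g = φ (MonoidAlgebra.single g 1) := fun g => rfl
  rcases (inferInstance : ψ.ker.Normal).eq_bot_or_eq_top with h | h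
  · exfalso
    apply hxc
    intro g
    apply (MonoidHom.ker_eq_bot_iff ψ).1 h
    rw [map_mul, map_mul, hψ x, ← hMdef, hc]
    exact (Algebra.commutes c (ψ g)).symm
  · intro g
    rw [← hψ]
    exact (MonoidHom.mem_ker).1 (h ▸ Subgroup.mem_top g)

end main

/-- Burnside: a group of composite order having a conjugacy class of prime-power size `> 1`
cannot be simple. -/
theorem burnside_prime_power_class_not_simple {G : Type*} [Group G] [Finite G]
    (hcomp : Nat.card G ≠ 1 ∧ ¬ (Nat.card G).Prime)
    (hclass : ∃ (x : G) (p a : ℕ), p.Prime ∧ 1 ≤ a ∧ classSize x = p ^ a) :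
    ¬ IsSimpleGroup G := by
  classical
  intro hsimple
  cases nonempty_fintype G
  obtain ⟨x, p, a, hp, ha, hcl⟩ := hclass
  unfold classSize at hcl
  have hxc : ¬ ∀ g : G, g * x = x * g := by
    intro h
    have : Subgroup.centralizer {x} = ⊤ := by
      rw [eq_top_iff]
      intro g _
      rw [Subgroup.mem_centralizer_singleton_iff]
      first | exact h g | exact (h g).symm
    rw [this, Subgroup.index_top] at hcl
    exact (Nat.one_lt_pow (by omega) hp.one_lt).ne hcl
  have hx1 : x ≠ 1 := by rintro rfl; exact hxc (by simp)
  obtain ⟨m, d, hd, ⟨e⟩⟩ :=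
    IsSemisimpleRing.exists_algEquiv_pi_matrix_of_isAlgClosed ℂ (MonoidAlgebra ℂ G)
  let φ : ∀ i, MonoidAlgebra ℂ G →ₐ[ℂ] Matrix (Fin (d i)) (Fin (d i)) ℂ := fun i =>
    (Pi.evalAlgHom ℂ (fun i => Matrix (Fin (d i)) (Fin (d i)) ℂ) i).comp e.toAlgHom
  have hφe : ∀ i b, φ i b = e b i := fun _ _ => rfl
  have hφ : ∀ i, Function.Surjective (φ i) := fun i =>
    (Function.surjective_eval i).comp e.surjective
  have hzero : ∑ i, (d i : ℂ) * (φ i (MonoidAlgebra.single x 1)).trace = 0 := by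
    have h1 := trace_pi_matrix d (e (MonoidAlgebra.single x 1))
    have h2 : LinearMap.mulLeft ℂ (e (MonoidAlgebra.single x 1)) =
        e.toLinearEquiv.conj (LinearMap.mulLeft ℂ (MonoidAlgebra.single x (1:ℂ))) := by
      refine LinearMap.ext fun b => ?_
      simp [LinearEquiv.conj_apply]
    rw [h2, LinearMap.trace_conj', trace_group x hx1] at h1
    exact h1.symm
  -- trivial constituents
  have htriv : ∀ i, (∀ g : G, φ i (MonoidAlgebra.single g 1) = 1) → ∀ b : MonoidAlgebra ℂ G,
      φ i b = algebraMap ℂ _ (MonoidAlgebra.lift ℂ ℂ G (1 : G →* ℂ) b) := by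
    intro i hi b
    induction b using MonoidAlgebra.induction_linear with
    | zero => simp
    | add f g hf hg => rw [map_add, map_add, map_add, hf, hg]
    | single g c =>
      have : MonoidAlgebra.single g c = c • MonoidAlgebra.single g (1:ℂ) := by simp
      rw [this, map_smul, hi, map_smul, MonoidAlgebra.lift_single]
      simp [Algebra.algebraMap_eq_smul_one]
  have huniq : ∀ i j, (∀ g : G, φ i (MonoidAlgebra.single g 1) = 1) →
      (∀ g : G, φ j (MonoidAlgebra.single g 1) = 1) → i = j := by
    intro i j hi hj
    by_contra hij
    obtain ⟨b, hb⟩ := e.surjective (Pi.single i 1)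
    have h1 := htriv i hi b
    have h2 := htriv j hj b
    rw [hφe, hb, Pi.single_eq_same] at h1
    rw [hφe, hb, Pi.single_eq_of_ne (Ne.symm hij)] at h2
    have h3 := (algebraMap ℂ (Matrix (Fin (d j)) (Fin (d j)) ℂ)).injective (h2.symm.trans (map_zero _).symm)
    rw [h3, map_zero] at h1
    exact one_ne_zero h1
  have hex : ∃ i, ∀ g : G, φ i (MonoidAlgebra.single g 1) = 1 := by
    let s : MonoidAlgebra ℂ G := ∑ g, MonoidAlgebra.single g 1
    have hgs : ∀ g, MonoidAlgebra.single g (1:ℂ) * s = s := by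
      intro g
      simp only [s, Finset.mul_sum, MonoidAlgebra.single_mul_single, mul_one]
      exact Fintype.sum_equiv (Equiv.mulLeft g) _ _ (fun _ => rfl)
    have hs0 : s ≠ 0 := by
      intro h
      have h1 : MonoidAlgebra.lift ℂ ℂ G (1 : G →* ℂ) s = 0 := by rw [h, map_zero]
      simp [s, map_sum, MonoidAlgebra.lift_single] at h1
    have hsg : ∀ g, s * MonoidAlgebra.single g (1:ℂ) = s := by
      intro g
      simp only [s, Finset.sum_mul, MonoidAlgebra.single_mul_single, mul_one]
      exact Fintype.sum_equiv (Equiv.mulRight g) _ _ (fun _ => rfl)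
    have hsc : ∀ b : MonoidAlgebra ℂ G, b * s = s * b := by
      intro b
      induction b using MonoidAlgebra.induction_linear with
      | zero => simp
      | add f g hf hg => rw [add_mul, mul_add, hf, hg]
      | single g c =>
        have : MonoidAlgebra.single g c = c • MonoidAlgebra.single g (1:ℂ) := by simp
        rw [this, smul_mul_assoc, hgs, mul_smul_comm, hsg]
    have hes : e s ≠ 0 := by simpa using hs0
    obtain ⟨i, hi⟩ := Function.ne_iff.1 hes
    refine ⟨i, fun g => ?_⟩
    have hcen : φ i s ∈ Set.center (Matrix (Fin (d i)) (Fin (d i)) ℂ) := by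
      rw [Semigroup.mem_center_iff]
      intro b
      obtain ⟨b, rfl⟩ := hφ i b
      rw [← map_mul, ← map_mul, hsc]
    rw [Matrix.center_eq_range] at hcen
    obtain ⟨ω, hω⟩ := hcen
    have hω0 : ω ≠ 0 := by
      rintro rfl
      rw [map_zero] at hω
      exact hi hω.symm
    have h1 : φ i (MonoidAlgebra.single g 1) * φ i s = φ i s := by rw [← map_mul, hgs]
    rw [← hω, Matrix.scalar_apply, ← Matrix.smul_one_eq_diagonal, mul_smul_comm, mul_one] at h1
    exact smul_right_injective _ hω0 h1
  obtain ⟨i₀, hi₀⟩ := hex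
  have hd1 : d i₀ = 1 := by
    by_contra hne
    have h2 : 1 < d i₀ := by have := (hd i₀).out; omega
    obtain ⟨b, hb⟩ := hφ i₀ (Matrix.single ⟨0, by omega⟩ ⟨1, h2⟩ 1)
    rw [htriv i₀ hi₀ b] at hb
    have h3 := congrFun (congrFun hb ⟨0, by omega⟩) ⟨1, h2⟩
    simp [Matrix.algebraMap_matrix_apply] at h3
  have hrest : ∀ i, ∃ β : ℂ, IsIntegral ℤ β ∧
      (i ≠ i₀ → (d i : ℂ) * (φ i (MonoidAlgebra.single x 1)).trace = p * β) := by
    intro i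
    by_cases hi : i = i₀
    · exact ⟨0, isIntegral_zero, fun h => absurd hi h⟩
    have := hd i
    rcases key_dichotomy x p a hp hcl hxc (φ i) (hφ i) with h | ⟨β, hβ, h⟩
    · exact absurd (huniq i i₀ h hi₀) hi
    · exact ⟨β, hβ, fun _ => h⟩
  choose β hβ hβe using hrest
  rw [← Finset.add_sum_erase _ _ (Finset.mem_univ i₀), hi₀, Matrix.trace_one, hd1,
    Finset.sum_congr rfl (fun i hi => hβe i (Finset.ne_of_mem_erase hi)), ← Finset.mul_sum,
    Fintype.card_fin] at hzero
  refine inv_p_not_integral p hp (-∑ i ∈ Finset.univ.erase i₀, β i)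
    (IsIntegral.sum _ fun i _ => hβ i).neg ?_
  push_cast at hzero
  linear_combination hzero
end

section
/- (Ito, 1953) Let G be a finite group whose set of conjugacy class sizes is N(G) = {1, n} for some integer n > 1. Then n is a power of some prime p, and G is nilpotent; more precisely, G is the direct product of a p-group A and an abelian group B whose order is coprime to p. -/
namespace Ito
open Subgroup

variable {G : Type*} [Group G]

lemma cop_mem (H : Subgroup G) {w : G} {a b : ℕ} (hab : Nat.Coprime a b)
    (ha : w ^ a ∈ H) (hb : w ^ b ∈ H) : w ∈ H := by
  have h : (1 : ℤ) = a * Nat.gcdA a b + b * Nat.gcdB a b := by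
    rw [← Nat.gcd_eq_gcd_ab, hab.gcd_eq_one]; rfl
  have : w = (w ^ a) ^ (Nat.gcdA a b) * (w ^ b) ^ (Nat.gcdB a b) := by
    conv_lhs => rw [← zpow_one w, h, zpow_add, zpow_mul, zpow_mul]
    simp
  rw [this]
  exact H.mul_mem (H.zpow_mem ha _) (H.zpow_mem hb _)

lemma decomp [Finite G] (p : ℕ) (hp : p.Prime) (g : G) : ∃ a b : G, g = a * b ∧
    a ∈ zpowers g ∧ b ∈ zpowers g ∧ (∃ k, a ^ (p ^ k) = 1) ∧
    ∃ r, Nat.Coprime r p ∧ b ^ r = 1 := by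
  have ho : orderOf g ≠ 0 := (orderOf_pos g).ne'
  obtain ⟨k, r, hr, hkr⟩ := Nat.exists_eq_pow_mul_and_not_dvd ho p hp.ne_one
  have hcop : Nat.Coprime r p := ((Nat.Prime.coprime_iff_not_dvd hp).2 hr).symm
  have hc : Nat.Coprime r (p ^ k) := hcop.pow_right k
  have h : (1 : ℤ) = r * Nat.gcdA r (p ^ k) + (p ^ k : ℕ) * Nat.gcdB r (p ^ k) := by
    rw [← Nat.gcd_eq_gcd_ab, hc.gcd_eq_one]; rfl
  have h1 : g ^ (p ^ k * r) = 1 := by rw [← hkr]; exact pow_orderOf_eq_one g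
  refine ⟨(g ^ r) ^ (Nat.gcdA r (p ^ k)), (g ^ (p ^ k)) ^ (Nat.gcdB r (p ^ k)), ?_, ?_, ?_,
    ⟨k, ?_⟩, r, hcop, ?_⟩
  · conv_lhs => rw [← zpow_one g, h, zpow_add, zpow_mul, zpow_mul, zpow_natCast, zpow_natCast]
  · exact zpow_mem (pow_mem (mem_zpowers g) _) _
  · exact zpow_mem (pow_mem (mem_zpowers g) _) _
  · rw [← zpow_natCast, ← zpow_mul, mul_comm, zpow_mul, zpow_natCast, ← pow_mul, mul_comm r, h1,
      one_zpow]
  · rw [← zpow_natCast, ← zpow_mul, mul_comm, zpow_mul, zpow_natCast, ← pow_mul, h1,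
      one_zpow]

/-- The subgroup of central elements of order prime to `p`. -/
def cenB (G : Type*) [Group G] (p : ℕ) : Subgroup G where
  carrier := {b | b ∈ center G ∧ ∃ r, Nat.Coprime r p ∧ b ^ r = 1}
  one_mem' := ⟨one_mem _, 1, by simp, by simp⟩
  mul_mem' := by
    rintro a b ⟨ha, r, hr, har⟩ ⟨hb, s, hs, hbs⟩
    refine ⟨mul_mem ha hb, r * s, hr.mul_left hs, ?_⟩
    have hc : Commute a b := (mem_center_iff.1 hb a)
    rw [hc.mul_pow, pow_mul, har, mul_comm r s, pow_mul, hbs]; simp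
  inv_mem' := by
    rintro a ⟨ha, r, hr, har⟩
    exact ⟨inv_mem ha, r, hr, by rw [inv_pow, har, inv_one]⟩

lemma final [Finite G] (p : ℕ) (hp : p.Prime) (h : ∀ w : G, ∃ k, w ^ (p ^ k) ∈ center G) :
    (∀ x : G, ∃ a, (centralizer {x}).index = p ^ a) ∧ Group.IsNilpotent G ∧
      ∃ A B : Subgroup G, A.Normal ∧ B.Normal ∧ Disjoint A B ∧ A ⊔ B = ⊤ ∧
        IsPGroup p A ∧ (∀ a b : B, a * b = b * a) ∧ Nat.Coprime (Nat.card B) p := by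
  have : Fact p.Prime := ⟨hp⟩
  have hq : IsPGroup p (G ⧸ center G) := by
    intro x
    obtain ⟨w, rfl⟩ := QuotientGroup.mk_surjective x
    obtain ⟨k, hk⟩ := h w
    refine ⟨k, ?_⟩
    rw [← QuotientGroup.mk_pow]
    exact (QuotientGroup.eq_one_iff _).2 hk
  have hnil : Group.IsNilpotent G := Group.of_quotient_center_nilpotent hq.isNilpotent
  refine ⟨?_, hnil, ?_⟩
  · intro x
    obtain ⟨N, hN⟩ := IsPGroup.iff_card.1 hq
    have h1 : (centralizer {x}).index ∣ (center G).index :=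
      index_dvd_of_le (center_le_centralizer _)
    rw [index_eq_card (center G), hN] at h1
    obtain ⟨a, _, ha⟩ := (Nat.dvd_prime_pow hp).1 h1
    exact ⟨a, ha⟩
  · obtain ⟨P⟩ : Nonempty (Sylow p G) := inferInstance
    have hPn : (P : Subgroup G).Normal := inferInstance
    have := P.unique_of_normal hPn
    refine ⟨P, cenB G p, hPn, ⟨?_⟩, ?_, ?_, P.2, ?_, ?_⟩
    · intro b hb g
      have : g * b * g⁻¹ = b := by rw [mem_center_iff.1 hb.1 g]; simp
      rwa [this]
    · rw [disjoint_def]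
      rintro x hx ⟨_, r, hr, hxr⟩
      obtain ⟨k, hk⟩ := P.2 ⟨x, hx⟩
      have hk' : x ^ (p ^ k) = 1 := by simpa using congrArg Subtype.val hk
      have := cop_mem (⊥ : Subgroup G) (w := x) (hr.pow_right k) (by simpa using hxr)
        (by simpa using hk')
      simpa using this
    · rw [eq_top_iff]
      intro g _
      obtain ⟨a, b, hab, _, _, ⟨k, hk⟩, r, hr, hbr⟩ := decomp p hp g
      rw [hab]
      apply mul_mem_sup
      · have hz : IsPGroup p (zpowers a) := by
          rw [IsPGroup.iff_card, Nat.card_zpowers]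
          obtain ⟨i, _, hi⟩ := (Nat.dvd_prime_pow hp).1 (orderOf_dvd_of_pow_eq_one hk)
          exact ⟨i, hi⟩
        obtain ⟨Q, hQ⟩ := hz.exists_le_sylow
        rw [Subsingleton.elim P Q]
        exact hQ (mem_zpowers a)
      · obtain ⟨j, hj⟩ := h b
        exact ⟨cop_mem _ (hr.pow_right j) (by rw [hbr]; exact one_mem _) hj, r, hr, hbr⟩
    · intro a b
      exact Subtype.ext (mem_center_iff.1 b.2.1 a)
    · rw [Nat.coprime_comm, Nat.Prime.coprime_iff_not_dvd hp]
      intro hd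
      obtain ⟨x, hx⟩ := exists_prime_orderOf_dvd_card' p hd
      obtain ⟨_, r, hr, hxr⟩ := x.2
      have : x ^ r = 1 := Subtype.ext (by simpa using hxr)
      have := orderOf_dvd_of_pow_eq_one this
      rw [hx] at this
      exact ((Nat.Prime.coprime_iff_not_dvd hp).1 hr.symm) this

lemma mem_cent {x y : G} : y ∈ centralizer {x} ↔ Commute x y := by
  rw [mem_centralizer_singleton_iff]; exact ⟨fun h => h.symm, fun h => h.symm⟩

lemma cent_le_of_mem {x y : G} (h : y ∈ zpowers x) : centralizer {x} ≤ centralizer {y} := by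
  obtain ⟨i, rfl⟩ := h
  intro w hw
  rw [mem_cent] at *
  exact hw.zpow_left i

variable [Finite G] {m : ℕ}

lemma cent_eq (hC : ∀ x : G, x ∉ center G → Nat.card (centralizer {x}) = Nat.card (center G) * m)
    {x y : G} (hx : x ∉ center G) (hy : y ∉ center G)
    (h : centralizer {x} ≤ centralizer {y}) : centralizer {x} = centralizer {y} :=
  eq_of_le_of_card_ge h (by rw [hC x hx, hC y hy])

lemma exists_prim {x : G} (hx : x ∉ center G) : ∃ p, p.Prime ∧ ∃ y ∈ zpowers x,
    y ∉ center G ∧ ∃ k, y ^ (p ^ k) = 1 := by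
  set N := orderOf (x : G ⧸ center G) with hN
  have hN1 : N ≠ 1 := by
    rw [hN, Ne, orderOf_eq_one_iff, QuotientGroup.eq_one_iff]; exact hx
  obtain ⟨p, hp, hpN⟩ := Nat.exists_prime_and_dvd hN1
  have hN0 : 0 < N := orderOf_pos _
  obtain ⟨t, ht⟩ := hpN
  have ht0 : 0 < t := by rcases Nat.eq_zero_or_pos t with h | h; · simp [h] at ht; omega
                         · exact h
  have h1 : x ^ t ∉ center G := by
    intro hh
    rw [← QuotientGroup.eq_one_iff, QuotientGroup.mk_pow] at hh
    have := Nat.le_of_dvd ht0 (orderOf_dvd_of_pow_eq_one hh)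
    rw [← hN, ht] at this
    nlinarith [hp.two_le]
  have h2 : (x ^ t) ^ p ∈ center G := by
    rw [← pow_mul, mul_comm, ← ht, ← QuotientGroup.eq_one_iff, QuotientGroup.mk_pow]
    exact pow_orderOf_eq_one _
  obtain ⟨a, b, hab, ha, ⟨i, hi⟩, hk, r, hr, hbr⟩ := decomp p hp (x ^ t)
  refine ⟨p, hp, a, zpowers_le.2 (pow_mem (mem_zpowers x) t) ha, ?_, hk⟩
  intro hac
  apply h1
  rw [hab]
  refine mul_mem hac (cop_mem _ hr (by rw [hbr]; exact one_mem _) ?_)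
  rw [← hi]
  show ((x ^ t) ^ i) ^ p ∈ _
  rw [← zpow_natCast, ← zpow_mul, mul_comm, zpow_mul, zpow_natCast]
  exact zpow_mem h2 i

lemma pprime_central
    (hC : ∀ x : G, x ∉ center G → Nat.card (centralizer {x}) = Nat.card (center G) * m)
    {p : ℕ} {x y : G} (hx : x ∉ center G) (hxk : ∃ k, x ^ (p ^ k) = 1)
    (hy : y ∈ centralizer {x}) (hyr : ∃ r, Nat.Coprime r p ∧ y ^ r = 1) :
    centralizer {x} ≤ centralizer {y} := by
  obtain ⟨k, hk⟩ := hxk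
  obtain ⟨r, hr, hyr⟩ := hyr
  rw [mem_cent] at hy
  have hmem : x ∈ zpowers (x * y) := by
    apply cop_mem _ (hr.pow_right k)
    · have : x ^ r = (x * y) ^ r := by rw [hy.mul_pow, hyr, mul_one]
      rw [this]; exact pow_mem (mem_zpowers _) _
    · rw [hk]; exact one_mem _
  have hle := cent_le_of_mem hmem
  have hxy : x * y ∉ center G := fun h => hx (zpowers_le.2 h hmem)
  have heq := cent_eq hC hxy hx hle
  intro w hw
  have h1 : Commute (x * y) w := by rw [← mem_cent, heq]; exact hw
  rw [mem_cent] at hw ⊢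
  have : y = x⁻¹ * (x * y) := by group
  rw [this]
  exact hw.inv_left.mul_left h1

lemma index_eq (hC : ∀ x : G, x ∉ center G → Nat.card (centralizer {x}) = Nat.card (center G) * m)
    {x : G} (hx : x ∉ center G) : ((center G).subgroupOf (centralizer {x})).index = m := by
  have h := card_mul_index ((center G).subgroupOf (centralizer {x}))
  rw [hC x hx, Nat.card_congr (subgroupOfEquivOfLe (center_le_centralizer {x})).toEquiv] at h
  exact Nat.eq_of_mul_eq_mul_left Nat.card_pos h

lemma case2
    (hC : ∀ x : G, x ∉ center G → Nat.card (centralizer {x}) = Nat.card (center G) * m)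
    {x : G} (hx : x ∉ center G)
    (hna : ¬ ∀ a ∈ centralizer {x}, ∀ b ∈ centralizer {x}, Commute a b) :
    ∃ p, p.Prime ∧ ∃ a, m = p ^ a := by
  obtain ⟨p, hp, y, hyx, hyc, hyk⟩ := exists_prim hx
  have hxy := cent_eq hC hx hyc (cent_le_of_mem hyx)
  rw [hxy] at hna
  have : Fact p.Prime := ⟨hp⟩
  refine ⟨p, hp, ?_⟩
  by_cases hall : ∀ b ∈ centralizer {y}, (∃ r, Nat.Coprime r p ∧ b ^ r = 1) → b ∈ center G
  · have hpg : IsPGroup p (centralizer {y} ⧸ (center G).subgroupOf (centralizer {y})) := by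
      intro w
      obtain ⟨w, rfl⟩ := QuotientGroup.mk_surjective w
      obtain ⟨a, b, hab, ha, hb, ⟨k, hk⟩, hbr⟩ := decomp p hp (w : G)
      have hb' := hall b (zpowers_le.2 w.2 hb) hbr
      refine ⟨k, ?_⟩
      rw [← QuotientGroup.mk_pow, QuotientGroup.eq_one_iff, mem_subgroupOf]
      have hc : Commute a b := mem_center_iff.1 hb' a
      push_cast
      rw [hab, hc.mul_pow, hk, one_mul]
      exact pow_mem hb' _
    obtain ⟨a, ha⟩ := IsPGroup.iff_card.1 hpg
    rw [← index_eq_card, index_eq hC hyc] at ha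
    exact ⟨a, ha⟩
  · exfalso
    push Not at hall
    obtain ⟨u, huy, ⟨r, hr, hur⟩, huc⟩ := hall
    obtain ⟨q, hq, v, hvu, hvc, l, hl⟩ := exists_prim huc
    have hvr : v ^ r = 1 := by
      obtain ⟨i, rfl⟩ := hvu
      show (u ^ i) ^ r = 1
      rw [← zpow_natCast, ← zpow_mul, mul_comm, zpow_mul, zpow_natCast, hur, one_zpow]
    have hqp : q ≠ p := by
      rintro rfl
      apply hvc
      exact cop_mem _ (hr.pow_right l) (by rw [hvr]; exact one_mem _)
        (by rw [hl]; exact one_mem _)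
    have hvy : v ∈ centralizer {y} := zpowers_le.2 huy hvu
    have heq := cent_eq hC hyc hvc (pprime_central hC hyc hyk hvy ⟨r, hr, hvr⟩)
    apply hna
    intro s hs t ht
    obtain ⟨a, b, hab, ha, hb, ⟨k, hk⟩, hbr⟩ := decomp p hp s
    have h1 : Commute b t :=
      mem_cent.1 (pprime_central hC hyc hyk (zpowers_le.2 hs hb) hbr ht)
    have h2 : Commute a t := by
      have hav : a ∈ centralizer {v} := by rw [← heq]; exact zpowers_le.2 hs ha
      have htv : t ∈ centralizer {v} := by rw [← heq]; exact ht
      exact mem_cent.1 (pprime_central hC hvc ⟨l, hl⟩ hav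
        ⟨p ^ k, ((Nat.coprime_primes hp hq).2 hqp.symm).pow_left k, hk⟩ htv)
    rw [hab]
    exact h2.mul_left h1

lemma card_qpart (H : Subgroup G) (hH : ∀ a ∈ H, ∀ b ∈ H, Commute a b) (q : ℕ) (hq : q.Prime) :
    Nat.card {a : G | a ∈ H ∧ ∃ k, a ^ (q ^ k) = 1} = q ^ (Nat.card H).factorization q := by
  have : Fact q.Prime := ⟨hq⟩
  obtain ⟨Q⟩ : Nonempty (Sylow q H) := inferInstance
  have hn : (Q : Subgroup H).Normal := ⟨fun b hb g => by
    have : g * b * g⁻¹ = b := by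
      have h : g * b = b * g := Subtype.ext (hH g g.2 b b.2)
      rw [h]; simp
    rwa [this]⟩
  have := Q.unique_of_normal hn
  rw [← Q.card_eq_multiplicity]
  have hset : {a : G | a ∈ H ∧ ∃ k, a ^ (q ^ k) = 1} = Subtype.val '' ((Q : Subgroup H) : Set H) := by
    ext a
    constructor
    · rintro ⟨ha, k, hk⟩
      refine ⟨⟨a, ha⟩, ?_, rfl⟩
      have hz : IsPGroup q (zpowers (⟨a, ha⟩ : H)) := by
        rw [IsPGroup.iff_card, Nat.card_zpowers]
        have hk' : (⟨a, ha⟩ : H) ^ (q ^ k) = 1 := Subtype.ext (by simpa using hk)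
        obtain ⟨i, _, hi⟩ := (Nat.dvd_prime_pow hq).1 (orderOf_dvd_of_pow_eq_one hk')
        exact ⟨i, hi⟩
      obtain ⟨R, hR⟩ := hz.exists_le_sylow
      rw [Subsingleton.elim Q R]
      exact hR (mem_zpowers _)
    · rintro ⟨⟨b, hb⟩, hbQ, rfl⟩
      refine ⟨hb, ?_⟩
      obtain ⟨k, hk⟩ := Q.2 ⟨⟨b, hb⟩, hbQ⟩
      exact ⟨k, by simpa using congrArg (fun t : (Q : Subgroup H) => ((t : H) : G)) hk⟩
  rw [hset, Nat.card_image_of_injective Subtype.val_injective]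
  rfl

lemma cent_eq' (hC : ∀ x : G, x ∉ center G → Nat.card (centralizer {x}) = Nat.card (center G) * m)
    (hA : ∀ x : G, x ∉ center G → ∀ a ∈ centralizer {x}, ∀ b ∈ centralizer {x}, Commute a b)
    {x y : G} (hx : x ∉ center G) (hy : y ∉ center G) (h : y ∈ centralizer {x}) :
    centralizer {x} = centralizer {y} :=
  cent_eq hC hx hy fun w hw => mem_cent.2 (hA x hx y h w hw)

/-- The set of centralizers of noncentral elements. -/
def cents (G : Type*) [Group G] : Set (Subgroup G) :=
  {H | ∃ x : G, x ∉ center G ∧ H = centralizer {x}}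

lemma count (hC : ∀ x : G, x ∉ center G → Nat.card (centralizer {x}) = Nat.card (center G) * m)
    (hA : ∀ x : G, x ∉ center G → ∀ a ∈ centralizer {x}, ∀ b ∈ centralizer {x}, Commute a b)
    {n : ℕ} (hn : Nat.card G = Nat.card (center G) * m * n) (hm : 0 < m) :
    Nat.card (cents G) * (m - 1) + 1 = m * n := by
  classical
  have : Fintype (cents G) := Fintype.ofFinite _
  let e : {x : G // x ∉ center G} ≃ Σ H : cents G, {y : G // y ∈ H.1 ∧ y ∉ center G} :=
    { toFun := fun x => ⟨⟨centralizer {x.1}, x.1, x.2, rfl⟩, x.1, mem_cent.2 (Commute.refl _), x.2⟩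
      invFun := fun s => ⟨s.2.1, s.2.2.2⟩
      left_inv := fun x => rfl
      right_inv := by
        rintro ⟨⟨H, x, hx, rfl⟩, y, hy, hyc⟩
        have h := cent_eq' hC hA hx hyc hy
        apply Sigma.ext
        · exact Subtype.ext h.symm
        · simp only
          congr! 1
          rw [h] }
  have hfib : ∀ H : cents G, Nat.card {y : G // y ∈ H.1 ∧ y ∉ center G} =
      Nat.card (center G) * (m - 1) := by
    rintro ⟨H, x, hx, rfl⟩
    have h1 := Set.ncard_sdiff_add_ncard_of_subset
      (show ((center G : Subgroup G) : Set G) ⊆ (centralizer {x} : Subgroup G) from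
        center_le_centralizer {x})
    have h2 : ((centralizer {x} : Subgroup G) : Set G).ncard = Nat.card (center G) * m := hC x hx
    have h3 : ((center G : Subgroup G) : Set G).ncard = Nat.card (center G) := rfl
    have h4 : (((centralizer {x} : Subgroup G) : Set G) \ ((center G : Subgroup G) : Set G)).ncard =
      Nat.card {y : G // y ∈ centralizer {x} ∧ y ∉ center G} := rfl
    rw [h2, h3, h4] at h1
    rw [Nat.mul_sub, mul_one]
    exact Nat.eq_sub_of_add_eq h1
  have hG : Nat.card {x : G // x ∉ center G} + Nat.card (center G) = Nat.card G := by
    have h1 := Set.ncard_sdiff_add_ncard_of_subset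
      (Set.subset_univ ((center G : Subgroup G) : Set G))
    rw [Set.ncard_univ] at h1
    rw [← h1]
    have : (Set.univ \ ((center G : Subgroup G) : Set G)) = {x | x ∉ center G} := by ext; simp
    rw [this]; rfl
  rw [Nat.card_congr e, Nat.card_sigma, Finset.sum_congr rfl (fun H _ => hfib H), hn] at hG
  simp only [Finset.sum_const, Finset.card_univ, smul_eq_mul, ← Nat.card_eq_fintype_card] at hG
  have hz : 0 < Nat.card (center G) := Nat.card_pos
  apply Nat.eq_of_mul_eq_mul_left hz
  rw [← mul_assoc _ m n, ← hG]; ring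

lemma conj_cent (g x : G) : (centralizer {x}).map (MulAut.conj g).toMonoidHom =
    centralizer {g * x * g⁻¹} := by
  ext w
  rw [mem_map_equiv, mem_cent, mem_cent]
  simp only [MulAut.conj_symm_apply]
  have : g⁻¹ * w * g = (MulAut.conj g⁻¹) w := by simp
  rw [this]
  have h2 : x = MulAut.conj g⁻¹ (g * x * g⁻¹) := by simp [mul_assoc]
  conv_lhs => rw [h2]
  exact commute_map_iff (MulAut.conj g⁻¹).injective

lemma conj_nc {x : G} (g : G) (hx : x ∉ center G) : g * x * g⁻¹ ∉ center G := by
  intro h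
  apply hx
  have := (inferInstance : (center G).Normal).conj_mem _ h g⁻¹
  simpa [mul_assoc] using this

instance centsAction : MulAction G (cents G) where
  smul g H := ⟨H.1.map (MulAut.conj g).toMonoidHom, by
    obtain ⟨H, x, hx, rfl⟩ := H
    exact ⟨g * x * g⁻¹, conj_nc g hx, conj_cent g x⟩⟩
  one_smul H := by
    apply Subtype.ext
    show H.1.map (MulAut.conj (1 : G)).toMonoidHom = H.1
    rw [map_one]
    exact map_id _
  mul_smul a b H := by
    apply Subtype.ext
    show H.1.map (MulAut.conj (a * b)).toMonoidHom =
      (H.1.map (MulAut.conj b).toMonoidHom).map (MulAut.conj a).toMonoidHom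
    rw [Subgroup.map_map, map_mul]
    rfl

lemma exists_fixed (hC : ∀ x : G, x ∉ center G → Nat.card (centralizer {x}) = Nat.card (center G) * m)
    (hA : ∀ x : G, x ∉ center G → ∀ a ∈ centralizer {x}, ∀ b ∈ centralizer {x}, Commute a b)
    {n : ℕ} (hn : Nat.card G = Nat.card (center G) * m * n) (hm : 0 < m)
    (p : ℕ) [Fact p.Prime] (hpm : p ∣ m) (S : Sylow p G) :
    ∃ x : G, x ∉ center G ∧ ∀ s ∈ S, ∀ a ∈ centralizer {x}, s * a * s⁻¹ ∈ centralizer {x} := by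
  have hcount := count hC hA hn hm
  have hp : p.Prime := Fact.out
  have hnd : ¬ p ∣ Nat.card (cents G) := by
    intro h
    have h1 : p ∣ Nat.card (cents G) * (m - 1) + 1 := by rw [hcount]; exact hpm.mul_right n
    have h2 := (Nat.dvd_add_right (h.mul_right (m - 1))).1 h1
    exact hp.one_lt.ne' (Nat.dvd_one.1 h2)
  obtain ⟨⟨H, x, hx, rfl⟩, hfix⟩ :=
    S.2.nonempty_fixed_point_of_prime_not_dvd_card (cents G) hnd
  refine ⟨x, hx, fun s hs a ha => ?_⟩
  have h := congrArg Subtype.val (hfix ⟨s, hs⟩)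
  have h' : (centralizer {x}).map (MulAut.conj s).toMonoidHom = centralizer {x} := h
  rw [← h']
  exact ⟨a, ha, rfl⟩

lemma semireg {S X : Type*} [Group S] [Finite S] [MulAction S X] [Finite X] (T : Subgroup S)
    (h : ∀ x : X, MulAction.stabilizer S x = T) : T.index ∣ Nat.card X := by
  classical
  have : Fintype (Quotient (MulAction.orbitRel S X)) := Fintype.ofFinite _
  rw [Nat.card_congr (MulAction.selfEquivSigmaOrbitsQuotientStabilizer S X), Nat.card_sigma]
  apply Finset.dvd_sum
  intro ω _
  rw [← index_eq_card, h]

lemma key (hC : ∀ x : G, x ∉ center G → Nat.card (centralizer {x}) = Nat.card (center G) * m)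
    (hA : ∀ x : G, x ∉ center G → ∀ a ∈ centralizer {x}, ∀ b ∈ centralizer {x}, Commute a b)
    {n : ℕ} (hn : Nat.card G = Nat.card (center G) * m * n) (hm : 0 < m) (hn0 : 0 < n)
    {p q : ℕ} (hp : p.Prime) (hq : q.Prime) (hpq : p ≠ q) (hpm : p ∣ m) (hqm : q ∣ m) :
    p ^ n.factorization p < q ^ m.factorization q := by
  have : Fact p.Prime := ⟨hp⟩
  have hz : 0 < Nat.card (center G) := Nat.card_pos
  obtain ⟨S⟩ : Nonempty (Sylow p G) := inferInstance
  obtain ⟨x, hx, hS⟩ := exists_fixed hC hA hn hm p hpm S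
  set C := centralizer {x} with hCdef
  have hcard : Nat.card C = Nat.card (center G) * m := hC x hx
  let X : Set G := {a : G | (a ∈ C ∧ ∃ k, a ^ (q ^ k) = 1) ∧ a ∉ center G}
  -- cardinality of X
  have hXcard : Nat.card X = q ^ (Nat.card (center G)).factorization q *
      (q ^ m.factorization q - 1) := by
    have h1 := Set.ncard_sdiff_add_ncard_of_subset
      (show {a : G | a ∈ center G ∧ ∃ k, a ^ (q ^ k) = 1} ⊆ {a : G | a ∈ C ∧ ∃ k, a ^ (q ^ k) = 1}
        from fun a ha => ⟨center_le_centralizer {x} ha.1, ha.2⟩)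
    have h2 : {a : G | a ∈ C ∧ ∃ k, a ^ (q ^ k) = 1} \
        {a : G | a ∈ center G ∧ ∃ k, a ^ (q ^ k) = 1} = X := by
      ext a
      simp only [Set.mem_sdiff, Set.mem_ofPred_eq, X]
      tauto
    have h3 := card_qpart C (hA x hx) q hq
    have h4 := card_qpart (center G) (fun a _ b hb => mem_center_iff.1 hb a) q hq
    rw [h2] at h1
    rw [Nat.card_coe_set_eq] at h3 h4 ⊢
    rw [h3, h4, hcard, Nat.factorization_mul hz.ne' hm.ne', Finsupp.add_apply, pow_add] at h1
    rw [Nat.mul_sub, mul_one]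
    exact Nat.eq_sub_of_add_eq h1
  let act : MulAction S X :=
    { smul := fun s a => ⟨s.1 * a.1 * s.1⁻¹, ⟨⟨hS s.1 s.2 a.1 a.2.1.1, by
        obtain ⟨k, hk⟩ := a.2.1.2
        exact ⟨k, by rw [conj_pow, hk]; simp⟩⟩, conj_nc s.1 a.2.2⟩⟩
      one_smul := fun a => Subtype.ext (by
        show ((1 : S) : G) * a.1 * ((1 : S) : G)⁻¹ = a.1
        simp)
      mul_smul := fun s t a => Subtype.ext (by
        show ((s * t : S) : G) * a.1 * ((s * t : S) : G)⁻¹ = s.1 * (t.1 * a.1 * t.1⁻¹) * s.1⁻¹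
        simp [mul_assoc]) }
  have hst : ∀ a : X, MulAction.stabilizer S a = C.subgroupOf S := by
    intro a
    ext s
    rw [MulAction.mem_stabilizer_iff, mem_subgroupOf]
    have hCa : C = centralizer {a.1} := cent_eq' hC hA hx a.2.2 a.2.1.1
    rw [hCa, mem_cent]
    constructor
    · intro h
      have h' : s.1 * a.1 * s.1⁻¹ = a.1 := congrArg Subtype.val h
      exact (mul_inv_eq_iff_eq_mul.1 h').symm
    · intro h
      apply Subtype.ext
      show s.1 * a.1 * s.1⁻¹ = a.1
      exact mul_inv_eq_iff_eq_mul.2 h.symm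
  have hd := semireg (C.subgroupOf S) hst
  rw [hXcard] at hd
  have hd2 : p ^ n.factorization p ∣ (C.subgroupOf (S : Subgroup G)).index := by
    have h1 := card_mul_index (C.subgroupOf (S : Subgroup G))
    have h2 : Nat.card (S : Subgroup G) = p ^ (Nat.card C).factorization p *
        p ^ n.factorization p := by
      rw [S.card_eq_multiplicity, hn, ← hcard,
        Nat.factorization_mul Nat.card_pos.ne' hn0.ne', Finsupp.add_apply, pow_add]
    have h3 : Nat.card (C.subgroupOf (S : Subgroup G)) ∣ p ^ (Nat.card C).factorization p := by
      obtain ⟨i, hi⟩ := IsPGroup.iff_card.1 (S.2.to_subgroup (C.subgroupOf (S : Subgroup G)))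
      have h4 : Nat.card (C.subgroupOf (S : Subgroup G)) ∣ Nat.card C := by
        have h5 : Nat.card ((C.subgroupOf (S : Subgroup G)).map (S : Subgroup G).subtype) ∣
            Nat.card C := card_dvd_of_le (by
              rw [subgroupOf_map_subtype]; exact inf_le_left)
        rwa [card_map_of_injective (subtype_injective _)] at h5
      rw [hi] at h4 ⊢
      exact pow_dvd_pow p ((hp.pow_dvd_iff_le_factorization Nat.card_pos.ne').1 h4)
    obtain ⟨t, ht⟩ := h3
    rw [h2, ht, mul_assoc] at h1
    have h6 := Nat.eq_of_mul_eq_mul_left Nat.card_pos h1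
    rw [h6]
    exact dvd_mul_left _ _
  have hd3 := hd2.trans hd
  have hcop : Nat.Coprime (p ^ n.factorization p) (q ^ (Nat.card (center G)).factorization q) :=
    Nat.Coprime.pow _ _ ((Nat.coprime_primes hp hq).2 hpq)
  have hd4 := hcop.dvd_of_dvd_mul_left hd3
  have hgt : 1 < q ^ m.factorization q :=
    Nat.one_lt_pow (hq.factorization_pos_of_dvd hm.ne' hqm).ne' hq.one_lt
  have := Nat.le_of_dvd (by omega) hd4
  omega

lemma prod_lt (P : Finset ℕ) (f g : ℕ → ℕ) (hP : 1 < P.card) (hf : ∀ p ∈ P, 0 < f p)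
    (h : ∀ p ∈ P, ∀ q ∈ P, p ≠ q → f p < g q) : ∏ p ∈ P, f p < ∏ p ∈ P, g p := by
  classical
  obtain ⟨q, hq, hmin⟩ := Finset.exists_min_image P g (Finset.card_pos.1 (by omega))
  obtain ⟨r, hr, hrq⟩ := Finset.exists_mem_ne hP q
  have hr' : r ∈ P.erase q := Finset.mem_erase.2 ⟨hrq, hr⟩
  rw [← Finset.mul_prod_erase P f hq, ← Finset.mul_prod_erase P g hq,
    ← Finset.mul_prod_erase _ f hr', ← Finset.mul_prod_erase _ g hr']
  have h1 := h q hq r hr hrq.symm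
  have h2 := h r hr q hq hrq
  have h3 : ∏ p ∈ (P.erase q).erase r, f p ≤ ∏ p ∈ (P.erase q).erase r, g p := by
    apply Finset.prod_le_prod' 
    intro p hp
    simp only [Finset.mem_erase] at hp
    exact (h p hp.2.2 q hq hp.2.1).le.trans (hmin p hp.2.2)
  have h4 : 0 < ∏ p ∈ (P.erase q).erase r, f p :=
    Finset.prod_pos fun p hp => hf p (Finset.mem_of_mem_erase (Finset.mem_of_mem_erase hp))
  rw [← mul_assoc, ← mul_assoc]
  calc f q * f r * _ < g q * g r * _ := by
        apply Nat.mul_lt_mul_of_pos_right _ h4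
        rw [mul_comm (g q)]
        exact Nat.mul_lt_mul'' h1 h2
    _ ≤ _ := Nat.mul_le_mul_left _ h3

lemma case1 (hC : ∀ x : G, x ∉ center G → Nat.card (centralizer {x}) = Nat.card (center G) * m)
    (hA : ∀ x : G, x ∉ center G → ∀ a ∈ centralizer {x}, ∀ b ∈ centralizer {x}, Commute a b)
    {n : ℕ} (hn : Nat.card G = Nat.card (center G) * m * n) (hm : 1 < m) (hn1 : 1 < n) :
    ∃ p, p.Prime ∧ ∃ a, m = p ^ a := by
  have hcount := count hC hA hn (by omega)
  have hle : m ≤ n := by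
    have h1 : m * n = (m - 1) * n + n := by
      obtain ⟨t, rfl⟩ : ∃ t, m = t + 1 := ⟨m - 1, by omega⟩
      simp; ring
    have h2 : (m - 1) ∣ n - 1 := by
      have h3 : (m - 1) * Nat.card (cents G) = (m - 1) * n + (n - 1) := by
        rw [mul_comm]; omega
      exact (Nat.dvd_add_right (dvd_mul_right _ _)).1 ⟨_, h3.symm⟩
    have := Nat.le_of_dvd (by omega) h2
    omega
  have hsub : n.primeFactors ⊆ m.primeFactors := by
    intro p hp
    have hpp := Nat.prime_of_mem_primeFactors hp
    have hpn := Nat.dvd_of_mem_primeFactors hp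
    have : Fact p.Prime := ⟨hpp⟩
    have hidx : (center G).index = m * n := by
      apply Nat.eq_of_mul_eq_mul_left (Nat.card_pos (α := center G))
      rw [card_mul_index, hn, mul_assoc]
    have hd : p ∣ Nat.card (G ⧸ center G) := by
      rw [← index_eq_card, hidx]; exact hpn.mul_left m
    obtain ⟨w, hw⟩ := exists_prime_orderOf_dvd_card' p hd
    obtain ⟨w, rfl⟩ := QuotientGroup.mk_surjective w
    have hwc : w ∉ center G := by
      intro h
      rw [(QuotientGroup.eq_one_iff _).2 h, orderOf_one] at hw
      exact hpp.ne_one hw.symm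
    refine Nat.mem_primeFactors.2 ⟨hpp, ?_, by omega⟩
    have hwm : w ^ m ∈ center G := by
      have := pow_index_mem ((center G).subgroupOf (centralizer {w}))
        ⟨w, mem_cent.2 (Commute.refl w)⟩
      rw [index_eq hC hwc, mem_subgroupOf] at this
      simpa using this
    rw [← hw]
    apply orderOf_dvd_of_pow_eq_one
    have := (QuotientGroup.eq_one_iff (N := center G) _).2 hwm
    simpa using this
  by_cases hcard : 1 < m.primeFactors.card
  · exfalso
    have h := prod_lt m.primeFactors (fun p => p ^ n.factorization p)
      (fun p => p ^ m.factorization p) hcard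
      (fun p hp => pow_pos (Nat.prime_of_mem_primeFactors hp).pos _)
      (fun p hp q hq hpq => key hC hA hn (by omega) (by omega)
        (Nat.prime_of_mem_primeFactors hp) (Nat.prime_of_mem_primeFactors hq) hpq
        (Nat.dvd_of_mem_primeFactors hp) (Nat.dvd_of_mem_primeFactors hq))
    have e1 : ∏ p ∈ m.primeFactors, p ^ m.factorization p = m :=
      Nat.prod_factorization_pow_eq_self (by omega)
    have e2 : ∏ p ∈ m.primeFactors, p ^ n.factorization p = n := by
      rw [← Finset.prod_subset hsub]
      · exact Nat.prod_factorization_pow_eq_self (by omega)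
      · intro p _ hp
        rw [← Nat.support_factorization, Finsupp.notMem_support_iff] at hp
        rw [hp, pow_zero]
    rw [e1, e2] at h
    omega
  · have h1 : m.primeFactors.card = 1 := by
      have : 0 < m.primeFactors.card := Finset.card_pos.2 (Nat.nonempty_primeFactors.2 hm)
      omega
    obtain ⟨p, hp⟩ := Finset.card_eq_one.1 h1
    refine ⟨p, Nat.prime_of_mem_primeFactors (n := m) (by rw [hp]; simp), m.factorization p, ?_⟩
    have e1 : ∏ p ∈ m.primeFactors, p ^ m.factorization p = m :=
      Nat.prod_factorization_pow_eq_self (by omega)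
    rw [hp, Finset.prod_singleton] at e1
    exact e1.symm

end Ito

open Subgroup

/-- Ito (1953): if `N(G) = {1, n}` with `n > 1`, then `n` is a prime power `p^a`, `G` is
nilpotent, and `G` is the (internal) direct product of a `p`-group and an abelian group of
order coprime to `p`. -/
theorem ito_two_class_sizes {G : Type*} [Group G] [Finite G] (n : ℕ) (hn : 1 < n)
    (hN : {k : ℕ | ∃ x : G, classSize x = k} = {1, n}) :
    ∃ p : ℕ, p.Prime ∧ (∃ a : ℕ, n = p ^ a) ∧ Group.IsNilpotent G ∧
      ∃ A B : Subgroup G, A.Normal ∧ B.Normal ∧ Disjoint A B ∧ A ⊔ B = ⊤ ∧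
        IsPGroup p A ∧ (∀ a b : B, a * b = b * a) ∧ Nat.Coprime (Nat.card B) p := by
  have hidx : ∀ x : G, x ∉ center G → (centralizer {x}).index = n := by
    intro x hx
    have h : classSize x ∈ {k : ℕ | ∃ x : G, classSize x = k} := ⟨x, rfl⟩
    rw [hN] at h
    rcases h with h | h
    · exfalso
      apply hx
      rw [classSize, index_eq_one] at h
      rw [mem_center_iff]
      intro g
      exact (Ito.mem_cent.1 (by rw [h]; trivial : g ∈ centralizer {x})).symm
    · exact h
  obtain ⟨x₀, hx₀⟩ : ∃ x : G, classSize x = n := by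
    have h : n ∈ ({1, n} : Set ℕ) := by simp
    rw [← hN] at h
    exact h
  have hx₀c : x₀ ∉ center G := by
    intro h
    have h1 : centralizer {x₀} = ⊤ := by
      rw [eq_top_iff]
      intro g _
      exact Ito.mem_cent.2 (mem_center_iff.1 h g).symm
    rw [classSize, h1, index_top] at hx₀
    omega
  obtain ⟨m, hm⟩ := card_dvd_of_le (center_le_centralizer ({x₀} : Set G))
  have hC : ∀ x : G, x ∉ center G →
      Nat.card (centralizer {x}) = Nat.card (center G) * m := by
    intro x hx
    rw [← hm]
    apply Nat.eq_of_mul_eq_mul_right (by omega : 0 < n)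
    conv_lhs => rw [← hidx x hx, card_mul_index]
    conv_rhs => rw [← hidx x₀ hx₀c, card_mul_index]
  have hcard : Nat.card G = Nat.card (center G) * m * n := by
    rw [← hm, ← hidx x₀ hx₀c, card_mul_index]
  have hm1 : 1 < m := by
    by_contra hlt
    have hle : Nat.card (centralizer {x₀}) ≤ Nat.card (center G) := by
      rw [hm]; nlinarith [Nat.card_pos (α := center G)]
    have := eq_of_le_of_card_ge (center_le_centralizer {x₀}) hle
    apply hx₀c
    rw [this]
    exact Ito.mem_cent.2 (Commute.refl _)
  have hpp : ∃ p, p.Prime ∧ ∃ a, m = p ^ a := by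
    by_cases hA : ∀ x : G, x ∉ center G →
        ∀ a ∈ centralizer {x}, ∀ b ∈ centralizer {x}, Commute a b
    · exact Ito.case1 hC hA hcard hm1 hn
    · rw [not_forall] at hA
      obtain ⟨x, hA⟩ := hA
      rw [Classical.not_imp] at hA
      exact Ito.case2 hC hA.1 hA.2
  obtain ⟨p, hp, a, ha⟩ := hpp
  obtain ⟨h1, h2, h3⟩ := Ito.final (G := G) p hp (by
    intro w
    by_cases hw : w ∈ center G
    · exact ⟨0, by simpa using hw⟩
    · refine ⟨a, ?_⟩
      have := pow_index_mem ((center G).subgroupOf (centralizer {w}))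
        ⟨w, Ito.mem_cent.2 (Commute.refl w)⟩
      rw [Ito.index_eq hC hw, mem_subgroupOf, ha] at this
      simpa using this)
  obtain ⟨b, hb⟩ := h1 x₀
  exact ⟨p, hp, ⟨b, by rw [← hb, hidx x₀ hx₀c]⟩, h2, h3⟩
end
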